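/- If G is a finite Q-group with gcd(|G|, 6) = 1, then G is metabelian and G/F(G) is cyclic, where F(G) is the Fitting subgroup of G. -/

import Mathlib

/-!
Let `S` be a `p`-group with `p ≥ 5` in which `x ^ p = 1` has at most `p ^ 2` solutions. These
solutions form a subgroup `Ω`, and `x ^ p = y ^ p` forces `(x⁻¹ * y) ^ p = 1`, so there are at
least `|S| / |Ω|` different `p`-th powers. Hence `S` is generated by two elements and its commutator
subgroup is cyclic; `S` itself is cyclic if `|Ω| < p ^ 2`; and an automorphism of `S` of order prime
to `p` that is trivial on `Ω` is trivial.

In a Q-group `G` of order prime to `6`, let `k` be maximal such that the solutions of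
`x ^ q ^ k = 1` form a subgroup `W` of order `q ^ (2 * k)`. Then the `q`-subgroups of `G / W` are
cyclic, so the Sylow subgroups of `G / F` are cyclic, where `F` is the Fitting subgroup. The
commutator subgroup of `G / F` is then a cyclic Hall subgroup; if a prime `r` divides its order,
every Sylow `r`-subgroup `R` of `G` lies in `F * G'`. For `p ≠ r`, such an `R` acts trivially on the
subgroup `Ω` of `O_p(G)`, which has order at most `p ^ 2`, and so `R` centralises `O_p(G)`.
Therefore `F` normalises `R`, the Frattini argument makes `R` normal, and `R ≤ F`, a contradiction.
So `G / F` is abelian with cyclic Sylow subgroups, that is, cyclic.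

For the commutator subgroup, fix a prime `p` and pass to the quotient `Γ` of `G` by the product
of the `O_q(G)` with `q ≠ p`: its Sylow `p`-subgroup `S` is normal with cyclic quotient of order
prime to `p`. Let `B` be maximal among the cyclic normal subgroups of `Γ` with `S' ≤ B ≤ S`. If
`S / B` were not cyclic, Maschke's theorem would provide a larger one. As `Γ'` centralises the
cyclic group `B` and has cyclic image in `S / B`, it is abelian. So `G''` lies in the product of the
`O_q(G)` with `q ≠ p`, for every `p`, and is trivial.
-/

namespace QGroup

open Subgroup
open scoped commutatorElement IsMulCommutative

section Collection

variable {G : Type*} [Group G] {x u c d f : G}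

theorem pow_mul_of_mul_eq (hcx : c * x = x * c * d) (hd : Commute d c) (n : ℕ) :
    c ^ n * x = x * c ^ n * d ^ n := by
  induction n with
  | zero => simp
  | succ n ih =>
    calc c ^ (n + 1) * x = c ^ n * x * (c * d) := by rw [pow_succ, mul_assoc, hcx]; group
      _ = x * c ^ n * (d ^ n * c) * d := by rw [ih]; group
      _ = x * c ^ (n + 1) * d ^ (n + 1) := by rw [(hd.pow_left n).eq, pow_succ, pow_succ]; group

theorem pow_mul_of_mul_eq_of_mul_eq (hux : u * x = x * u * c) (hcu : c * u = u * c * f)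
    (hfu : Commute f u) (hfc : Commute f c) (n : ℕ) :
    u ^ n * x = x * u ^ n * c ^ n * f ^ n.choose 2 := by
  induction n with
  | zero => simp
  | succ n ih =>
    have hchoose : (n + 1).choose 2 = n + n.choose 2 := by
      rw [Nat.choose_succ_succ' n 1, Nat.choose_one_right]
    calc u ^ (n + 1) * x = u ^ n * x * (u * c) := by rw [pow_succ, mul_assoc, hux]; group
      _ = x * u ^ n * c ^ n * (f ^ n.choose 2 * (u * c)) := by rw [ih]; group
      _ = x * u ^ n * (c ^ n * u) * c * f ^ n.choose 2 := by
        rw [((hfu.mul_right hfc).pow_left _).eq]; group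
      _ = x * u ^ n * u * c ^ n * (f ^ n * c) * f ^ n.choose 2 := by
        rw [pow_mul_of_mul_eq hcu hfc]; group
      _ = x * u ^ (n + 1) * c ^ (n + 1) * f ^ (n + 1).choose 2 := by
        rw [(hfc.pow_left n).eq, hchoose]; group

theorem mul_pow_of_mul_eq (hux : u * x = x * u * c) (hcx : c * x = x * c * d)
    (hcu : c * u = u * c * f) (hd : d ∈ center G) (hf : f ∈ center G) (n : ℕ) :
    (x * u) ^ n =
      x ^ n * u ^ n * c ^ n.choose 2 * d ^ n.choose 3 * f ^ (n.choose 2 + 2 * n.choose 3) := by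
  have hd (g : G) : Commute d g := (mem_center_iff.1 hd g).symm
  have hf (g : G) : Commute f g := (mem_center_iff.1 hf g).symm
  induction n with
  | zero => simp
  | succ n ih =>
    set a := n.choose 2 with ha
    set b := n.choose 3
    have ha' : (n + 1).choose 2 = n + a := by
      rw [Nat.choose_succ_succ' n 1, Nat.choose_one_right]
    have hb' : (n + 1).choose 3 = a + b := by rw [Nat.choose_succ_succ' n 2]
    calc (x * u) ^ (n + 1)
        = x ^ n * u ^ n * c ^ a * (d ^ b * f ^ (a + 2 * b) * (x * u)) := by
          rw [pow_succ, ih]; group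
      _ = x ^ n * u ^ n * (c ^ a * x) * u * d ^ b * f ^ (a + 2 * b) := by
          rw [(((hd _).pow_left b).mul_left ((hf _).pow_left _)).eq]; group
      _ = x ^ n * (u ^ n * x) * c ^ a * (d ^ a * u) * d ^ b * f ^ (a + 2 * b) := by
          rw [pow_mul_of_mul_eq hcx (hd c)]; group
      _ = x ^ n * x * u ^ n * c ^ n * (f ^ a * (c ^ a * u)) * d ^ (a + b) * f ^ (a + 2 * b) := by
          rw [pow_mul_of_mul_eq_of_mul_eq hux hcu (hf u) (hf c), ((hd u).pow_left a).eq, ← ha]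
          group
      _ = x ^ n * x * u ^ n * (c ^ n * u) * c ^ a * (f ^ a * (f ^ a * d ^ (a + b))) *
            f ^ (a + 2 * b) := by
          rw [((hf _).pow_left a).eq, pow_mul_of_mul_eq hcu (hf c)]; group
      _ = x ^ n * x * u ^ n * u * c ^ n * (f ^ n * c ^ a) * (f ^ (a + a) * d ^ (a + b)) *
            f ^ (a + 2 * b) := by
          rw [pow_mul_of_mul_eq hcu (hf c)]; group
      _ = x ^ n * x * u ^ n * u * c ^ n * c ^ a * (f ^ (n + a + a) * d ^ (a + b)) *
            f ^ (a + 2 * b) := by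
          rw [((hf _).pow_left n).eq]; group
      _ = x ^ (n + 1) * u ^ (n + 1) * c ^ (n + 1).choose 2 * d ^ (n + 1).choose 3 *
            f ^ ((n + 1).choose 2 + 2 * (n + 1).choose 3) := by
          rw [((hf _).pow_left _).eq, ha', hb']; group

theorem mul_pow_eq_of_pow_eq_one {p : ℕ} (hp : p.Prime) (hp3 : 3 < p)
    (hux : u * x = x * u * c) (hcx : c * x = x * c * d) (hcu : c * u = u * c * f)
    (hd : d ∈ center G) (hf : f ∈ center G) (hcp : c ^ p = 1) (hdp : d ^ p = 1)
    (hfp : f ^ p = 1) : (x * u) ^ p = x ^ p * u ^ p := by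
  obtain ⟨a, ha⟩ := hp.dvd_choose_self two_ne_zero (by omega)
  obtain ⟨b, hb⟩ := hp.dvd_choose_self three_ne_zero hp3
  rw [mul_pow_of_mul_eq hux hcx hcu hd hf, ha, hb, mul_left_comm, ← mul_add]
  simp [pow_mul, hcp, hdp, hfp]

end Collection

section FinitePGroup

variable {p : ℕ} [Fact p.Prime] {G S : Type*} [Group G] [Group S] [Finite S]

theorem mul_card_le_card_of_lt {A B : Subgroup G} [Finite B] (hB : IsPGroup p B) (hAB : A < B) :
    p * Nat.card A ≤ Nat.card B := by
  have hp : p.Prime := Fact.out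
  obtain ⟨b, hb⟩ := IsPGroup.iff_card.1 hB
  obtain ⟨a, -, ha⟩ := (Nat.dvd_prime_pow hp).1 (hb ▸ card_dvd_of_le hAB.le)
  have hlt : Nat.card A < Nat.card B :=
    not_le.1 fun h ↦ hAB.ne (eq_of_le_of_card_ge hAB.le h)
  rw [ha, hb] at hlt ⊢
  rw [← pow_succ']
  exact Nat.pow_le_pow_right hp.pos ((Nat.pow_lt_pow_iff_right hp.one_lt).1 hlt)

theorem isMulCommutative_of_card_le_prime_sq (hS : IsPGroup p S) (h : Nat.card S ≤ p ^ 2) :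
    IsMulCommutative S := by
  have hp : p.Prime := Fact.out
  obtain ⟨n, hn⟩ := IsPGroup.iff_card.1 hS
  have hn2 : n ≤ 2 := (Nat.pow_le_pow_iff_right hp.one_lt).1 (hn ▸ h)
  interval_cases n
  · have := (Nat.card_eq_one_iff_unique.1 (hn.trans (pow_zero p))).1
    exact ⟨⟨fun _ _ ↦ Subsingleton.elim _ _⟩⟩
  · have := isCyclic_of_prime_card (hn.trans (pow_one p))
    infer_instance
  · exact IsPGroup.isMulCommutative_of_card_eq_prime_sq hn

theorem commutator_lt_of_isNilpotent (N P : Subgroup G) [N.Normal] [Group.IsNilpotent P]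
    (hNP : N ≤ P) (hN : N ≠ ⊥) : ⁅N, P⁆ < N := by
  refine lt_of_le_of_ne (commutator_le_left N P) fun heq ↦ hN ?_
  have hle (n : ℕ) : N ≤ P.lowerCentralSeries n := by
    induction n with
    | zero => exact hNP
    | succ n ih => exact heq.ge.trans (commutator_mono ih le_rfl)
  obtain ⟨n, hn⟩ := P.isNilpotent_iff_lowerCentralSeries.1 ‹_›
  exact le_bot_iff.1 (hn ▸ hle n)

theorem commutator_commutator_eq_bot_of_card_le {N P : Subgroup G} [N.Normal] [P.Normal]
    [Finite P] (hP : IsPGroup p P) (hNP : N ≤ P) (hN : Nat.card N ≤ p ^ 2) :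
    ⁅⁅N, P⁆, P⁆ = ⊥ := by
  have hp : 1 < p := (Fact.out : p.Prime).one_lt
  have := hP.isNilpotent
  have hfin {H : Subgroup G} (hH : H ≤ P) : Finite H :=
    Finite.of_injective _ (inclusion_injective hH)
  by_contra hne
  have h₂ : ⁅N, P⁆ ≠ ⊥ := fun h ↦ hne (by rw [h, commutator_bot_left])
  have h₁ : N ≠ ⊥ := fun h ↦ h₂ (by rw [h, commutator_bot_left])
  have hNP' : ⁅N, P⁆ ≤ P := (commutator_le_left N P).trans hNP
  have := hfin hNP
  have := hfin hNP'
  have := hfin ((commutator_le_left ⁅N, P⁆ P).trans hNP')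
  have hcard₁ := mul_card_le_card_of_lt (hP.to_le hNP) (commutator_lt_of_isNilpotent N P hNP h₁)
  have hcard₂ := mul_card_le_card_of_lt (hP.to_le hNP')
    (commutator_lt_of_isNilpotent ⁅N, P⁆ P hNP' h₂)
  have hcard₃ := (one_lt_card_iff_ne_bot _).2 hne
  nlinarith [Nat.mul_le_mul_left p hcard₂, Nat.mul_lt_mul_of_pos_left hcard₃ (pow_pos hp.le 2)]

theorem pow_mem_of_isCoatom (hS : IsPGroup p S) {M : Subgroup S} (hM : IsCoatom M) (x : S) :
    x ^ p ∈ M := by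
  have hp : p.Prime := Fact.out
  have := hS.isNilpotent
  have hMn : M.Normal :=
    NormalizerCondition.normal_of_coatom M Group.normalizerCondition_of_isNilpotent hM
  obtain ⟨n, hn⟩ := IsPGroup.iff_card.1 (hS.to_subgroup M)
  have hdvd : p ^ (n + 1) ∣ Nat.card S := by
    obtain ⟨k, hk⟩ := hS.index M
    have hk0 : k ≠ 0 := fun h ↦ hM.1 (index_eq_one.1 (by rw [hk, h, pow_zero]))
    rw [← M.card_mul_index, hn, hk, pow_succ]
    exact mul_dvd_mul_left _ (dvd_pow_self p hk0)
  obtain ⟨K, hK, hMK⟩ := Sylow.exists_subgroup_card_pow_succ hdvd hn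
  have hKtop : K = ⊤ := hM.2 K (lt_of_le_of_ne hMK fun h ↦ by
    rw [h, hK] at hn
    exact (Nat.pow_lt_pow_succ hp.one_lt).ne' hn)
  have hindex : M.index = p := by
    have := M.card_mul_index
    rw [← card_top (G := S), ← hKtop, hK, hn, pow_succ] at this
    exact Nat.eq_of_mul_eq_mul_left (pow_pos hp.pos n) this
  exact hindex ▸ M.pow_index_mem x

theorem exists_closure_range_sup_eq_top (hS : IsPGroup p S) {d : ℕ} :
    ∀ {N : Subgroup S}, N.index ≤ p ^ d → ∃ g : Fin d → S, closure (Set.range g) ⊔ N = ⊤ := by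
  induction d with
  | zero =>
    intro N hN
    have : N = ⊤ := index_eq_one.1 (le_antisymm hN (Nat.pos_of_ne_zero index_ne_zero_of_finite))
    exact ⟨Fin.elim0, by simp [this]⟩
  | succ d ih =>
    intro N hN
    obtain rfl | hNtop := eq_or_ne N ⊤
    · exact ⟨1, sup_top_eq _⟩
    obtain ⟨x, -, hx⟩ := SetLike.exists_of_lt (lt_top_iff_ne_top.2 hNtop)
    have hlt : N < closure {x} ⊔ N := right_lt_sup.2 fun h ↦ hx (h (mem_closure_singleton_self x))
    have hindex : (closure {x} ⊔ N).index ≤ p ^ d := by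
      have hcard := mul_card_le_card_of_lt (hS.to_subgroup _) hlt
      have hN' := N.card_mul_index
      rw [← (closure {x} ⊔ N).card_mul_index] at hN'
      rw [pow_succ] at hN
      have hp := (Fact.out : p.Prime).pos
      have hpos : 0 < Nat.card N := Nat.card_pos
      nlinarith [Nat.mul_le_mul_right (closure {x} ⊔ N).index hcard,
        Nat.mul_le_mul_left (Nat.card N) hN, Nat.mul_pos hp hpos]
    obtain ⟨g, hg⟩ := ih hindex
    refine ⟨Fin.cons x g, ?_⟩
    rw [Fin.range_cons, Set.insert_eq, Subgroup.closure_union, sup_comm (closure {x}), sup_assoc,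
      hg]

end FinitePGroup

section SmallOmega

/-- A `p`-group in which `x ^ p = 1` has at most `p ^ 2` solutions: the part of the Q-group
condition that is inherited by `p`-subgroups and determines their structure when `p > 3`. -/
structure HasSmallOmega (p : ℕ) (S : Type*) [Group S] : Prop where
  isPGroup : IsPGroup p S
  card_le : Nat.card {x : S // x ^ p = 1} ≤ p ^ 2

/-- The subgroup `Ω₁(S)` generated by the solutions of `x ^ p = 1`. -/
def omega (p : ℕ) (S : Type*) [Group S] : Subgroup S :=
  closure {x : S | x ^ p = 1}

/-- The subgroup `℧₁(S)` generated by the `p`-th powers. -/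
def agemo (p : ℕ) (S : Type*) [Group S] : Subgroup S :=
  closure (Set.range fun x : S ↦ x ^ p)

instance (p : ℕ) (S : Type*) [Group S] : (omega p S).Characteristic := by
  rw [characteristic_iff_map_le]
  intro φ
  rw [omega, MonoidHom.map_closure, closure_le]
  rintro _ ⟨x, hx, rfl⟩
  exact subset_closure (by simp [← map_pow, hx.out])

instance (p : ℕ) (S : Type*) [Group S] : (agemo p S).Characteristic := by
  rw [characteristic_iff_map_le]
  intro φ
  rw [agemo, MonoidHom.map_closure, closure_le]
  rintro _ ⟨_, ⟨x, rfl⟩, rfl⟩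
  exact subset_closure ⟨φ x, by simp⟩

theorem pow_mem_agemo (p : ℕ) {S : Type*} [Group S] (x : S) : x ^ p ∈ agemo p S :=
  subset_closure ⟨x, rfl⟩

theorem HasSmallOmega.of_injective {p : ℕ} {S T : Type*} [Group S] [Finite S] [Group T]
    (h : HasSmallOmega p S) {f : T →* S} (hf : Function.Injective f) : HasSmallOmega p T where
  isPGroup := h.isPGroup.of_injective f hf
  card_le := (Nat.card_le_card_of_injective
    (Subtype.map f fun x hx ↦ by rw [← map_pow, hx, map_one]) (Subtype.map_injective _ hf)).trans
    h.card_le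

theorem HasSmallOmega.to_subgroup {p : ℕ} {S : Type*} [Group S] [Finite S]
    (h : HasSmallOmega p S) (H : Subgroup S) : HasSmallOmega p H :=
  h.of_injective H.subtype_injective

theorem commutator_le_of_closure_pair_eq_top {S : Type*} [Group S] {N : Subgroup S} [N.Normal]
    {x y : S} (hxy : closure {x, y} = ⊤) (hN : ⁅x, y⁆ ∈ N) : commutator S ≤ N := by
  let π := QuotientGroup.mk' N
  have hcomm : Commute (π x) (π y) := by
    rw [← commutatorElement_eq_one_iff_commute, ← map_commutatorElement]
    exact (QuotientGroup.eq_one_iff _).2 hN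
  have htop : closure {π x, π y} = ⊤ := by
    rw [← Set.image_pair, ← MonoidHom.map_closure, hxy,
      map_top_of_surjective _ (QuotientGroup.mk'_surjective N)]
  have hmul : IsMulCommutative (closure {π x, π y}) := isMulCommutative_closure <| by
    rintro _ (rfl | rfl) _ (rfl | rfl)
    exacts [rfl, hcomm, hcomm.symm, rfl]
  rw [← Normal.quotient_commutative_iff_commutator_le]
  exact ⟨⟨fun a b ↦ setLike_mul_comm (htop ▸ mem_top a) (htop ▸ mem_top b)⟩⟩

variable {p : ℕ} [Fact p.Prime] {S : Type*} [Group S] [Finite S]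

theorem agemo_le_frattini (hS : IsPGroup p S) : agemo p S ≤ frattini S := by
  refine le_iInf₂ fun M hM ↦ (closure_le _).2 ?_
  rintro _ ⟨x, rfl⟩
  exact pow_mem_of_isCoatom hS hM x

theorem eq_top_of_sup_agemo_eq_top (hS : IsPGroup p S) {K : Subgroup S}
    (hK : K ⊔ agemo p S = ⊤) : K = ⊤ :=
  frattini_nongenerating (top_le_iff.1 (hK ▸ sup_le_sup_left (agemo_le_frattini hS) K))

theorem mul_pow_of_commutatorElement_mem (hp3 : 3 < p) (hS : IsPGroup p S) {N : Subgroup S}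
    [N.Normal] (hN : Nat.card N ≤ p ^ 2) (hexp : ∀ x ∈ N, x ^ p = 1) {x u : S}
    (hxu : ⁅x, u⁆ ∈ N) : (x * u) ^ p = x ^ p * u ^ p := by
  have hcenter {d : S} (hd : d ∈ ⁅N, (⊤ : Subgroup S)⁆) : d ∈ center S := by
    refine mem_center_iff.2 fun g ↦ ((commutatorElement_eq_one_iff_mul_comm).1 ?_).symm
    rw [← mem_bot, ← commutator_commutator_eq_bot_of_card_le (hS.to_subgroup ⊤) le_top hN]
    exact commutator_mem_commutator hd (mem_top g)
  have hc : ⁅u⁻¹, x⁻¹⁆ ∈ N := by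
    have heq : ⁅u⁻¹, x⁻¹⁆ = (x * u)⁻¹ * ⁅x, u⁆⁻¹ * (x * u)⁻¹⁻¹ := by group
    exact heq ▸ Normal.conj_mem ‹_› _ (inv_mem hxu) _
  have hcg (g : S) : ⁅⁅u⁻¹, x⁻¹⁆⁻¹, g⁻¹⁆ ∈ ⁅N, (⊤ : Subgroup S)⁆ :=
    commutator_mem_commutator (inv_mem hc) (mem_top _)
  have hexp' {d : S} (hd : d ∈ ⁅N, (⊤ : Subgroup S)⁆) : d ^ p = 1 :=
    hexp d (commutator_le_left N ⊤ hd)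
  exact mul_pow_eq_of_pow_eq_one (d := ⁅⁅u⁻¹, x⁻¹⁆⁻¹, x⁻¹⁆) (f := ⁅⁅u⁻¹, x⁻¹⁆⁻¹, u⁻¹⁆)
    Fact.out hp3 (by group) (by group) (by group) (hcenter (hcg x)) (hcenter (hcg u))
    (hexp _ hc) (hexp' (hcg x)) (hexp' (hcg u))

theorem pow_mem_center_of_card_commutator_le (hp3 : 3 < p) (hS : IsPGroup p S)
    (hcard : Nat.card (commutator S) ≤ p ^ 2) (hexp : ∀ x ∈ commutator S, x ^ p = 1) (x : S) :
    x ^ p ∈ center S := by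
  have hmem (a b : S) : ⁅a, b⁆ ∈ commutator S := commutator_mem_commutator (mem_top a) (mem_top b)
  refine mem_center_iff.2 fun y ↦ mul_inv_eq_iff_eq_mul.1 ?_
  calc y * x ^ p * y⁻¹ = (x * ⁅x⁻¹, y⁆) ^ p := by
        rw [← conj_pow]; congr 1; group
    _ = x ^ p := by
        rw [mul_pow_of_commutatorElement_mem hp3 hS hcard hexp (hmem _ _), hexp _ (hmem _ _),
          mul_one]

namespace HasSmallOmega

theorem exists_subgroup_of_exponent (h : HasSmallOmega p S) :
    ∃ E : Subgroup S, {x | x ^ p = 1} ⊆ (E : Set S) ∧ ∀ x ∈ E, x ^ p = 1 := by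
  obtain _ | _ := subsingleton_or_nontrivial S
  · exact ⟨⊤, Set.subset_univ _, fun x _ ↦ Subsingleton.elim _ _⟩
  have := h.isPGroup.center_nontrivial
  have hpdvd : p ∣ Nat.card (center S) :=
    (h.isPGroup.to_subgroup _).card_eq_or_dvd.resolve_left Finite.one_lt_card.ne'
  obtain ⟨⟨z, hz⟩, hzp⟩ := exists_prime_orderOf_dvd_card' p hpdvd
  rw [orderOf_mk] at hzp
  have hpow {a b : S} (ha : a ^ p = 1) (hb : b ∈ zpowers a) : b ^ p = 1 :=
    orderOf_dvd_iff_pow_eq_one.1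
      ((orderOf_dvd_of_mem_zpowers hb).trans (orderOf_dvd_iff_pow_eq_one.2 ha))
  have hz1 : z ^ p = 1 := hzp ▸ pow_orderOf_eq_one z
  by_cases hall : {x | x ^ p = 1} ⊆ (zpowers z : Set S)
  · exact ⟨zpowers z, hall, fun x ↦ hpow hz1⟩
  obtain ⟨x, hx, hxz⟩ := Set.not_subset.1 hall
  have hzc : zpowers z ≤ center S := zpowers_le.2 hz
  have : (zpowers z).Normal := ⟨fun a ha g ↦ by
    rwa [mem_center_iff.1 (hzc ha) g, mul_inv_cancel_right]⟩
  have hexp : ∀ y ∈ zpowers x ⊔ zpowers z, y ^ p = 1 := fun y hy ↦ by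
    obtain ⟨a, ha, b, hb, rfl⟩ := mem_sup_of_normal_right.1 hy
    have hab : Commute a b := mem_center_iff.1 (hzc hb) a
    rw [hab.mul_pow, hpow hx ha, hpow hz1 hb, one_mul]
  have hcard : p ^ 2 ≤ Nat.card (zpowers x ⊔ zpowers z : Subgroup S) := by
    have hlt : zpowers z < zpowers x ⊔ zpowers z :=
      right_lt_sup.2 fun hle ↦ hxz (hle (mem_zpowers x))
    simpa [pow_two, Nat.card_zpowers, hzp] using
      mul_card_le_card_of_lt (h.isPGroup.to_subgroup _) hlt
  have heq : ((zpowers x ⊔ zpowers z : Subgroup S) : Set S) = {x | x ^ p = 1} :=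
    Set.eq_of_subset_of_ncard_le hexp (h.card_le.trans hcard) (Set.toFinite _)
  exact ⟨_, heq.ge, hexp⟩

theorem mem_omega_iff (h : HasSmallOmega p S) {x : S} : x ∈ omega p S ↔ x ^ p = 1 := by
  obtain ⟨E, hE, hexp⟩ := h.exists_subgroup_of_exponent
  exact ⟨fun hx ↦ hexp x ((closure_le E).2 hE hx), fun hx ↦ subset_closure hx⟩

theorem card_omega_le (h : HasSmallOmega p S) : Nat.card (omega p S) ≤ p ^ 2 :=
  (Nat.card_congr (Equiv.subtypeEquivRight fun _ ↦ h.mem_omega_iff)).trans_le h.card_le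

theorem pow_inv_mul_eq_one (h : HasSmallOmega p S) (hp3 : 3 < p) {x y : S}
    (hxy : x ^ p = y ^ p) : (x⁻¹ * y) ^ p = 1 := by
  induction hn : Nat.card S using Nat.strong_induction_on generalizing S with
  | _ n ih =>
    obtain htop | ⟨M, hM, hxM⟩ := eq_top_or_exists_le_coatom (zpowers x)
    · obtain ⟨k, rfl⟩ : y ∈ zpowers x := htop ▸ mem_top y
      have hcomm : Commute x⁻¹ (x ^ k) := (Commute.refl x).inv_left.zpow_right k
      rw [hcomm.mul_pow, inv_pow, hxy, inv_mul_cancel]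
    have := h.isPGroup.isNilpotent
    have : M.Normal :=
      NormalizerCondition.normal_of_coatom M Group.normalizerCondition_of_isNilpotent hM
    have hxM : x ∈ M := hxM (mem_zpowers x)
    have hyM : y * x * y⁻¹ ∈ M := Normal.conj_mem ‹_› x hxM y
    have hcard : Nat.card M < n :=
      hn ▸ not_le.1 fun hle ↦ hM.1 (eq_top_of_le_card M hle)
    have hconj : (⟨x, hxM⟩ : M) ^ p = ⟨y * x * y⁻¹, hyM⟩ ^ p :=
      Subtype.ext <| show x ^ p = (y * x * y⁻¹) ^ p by
        rw [conj_pow, hxy, ← pow_succ', pow_succ, mul_inv_cancel_right]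
    have hcomm : (x⁻¹ * (y * x * y⁻¹)) ^ p = 1 :=
      congrArg Subtype.val (ih _ hcard (h.to_subgroup M) hconj rfl)
    have hmem : ⁅x, x⁻¹ * y⁆ ∈ omega p S := by
      have heq : ⁅x, x⁻¹ * y⁆ = (x⁻¹ * (y * x * y⁻¹))⁻¹ := by group
      exact heq ▸ inv_mem (h.mem_omega_iff.2 hcomm)
    have hmul := mul_pow_of_commutatorElement_mem hp3 h.isPGroup h.card_omega_le
      (fun _ ↦ h.mem_omega_iff.1) hmem
    rw [mul_inv_cancel_left, ← hxy] at hmul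
    exact mul_eq_left.1 hmul.symm

theorem index_agemo_le (h : HasSmallOmega p S) (hp3 : 3 < p) :
    (agemo p S).index ≤ Nat.card (omega p S) := by
  have hcard : (omega p S).index ≤ Nat.card (agemo p S) := by
    refine Nat.card_le_card_of_injective
      (fun q : S ⧸ omega p S ↦ (⟨q.out ^ p, pow_mem_agemo p _⟩ : agemo p S)) fun a b hab ↦ ?_
    have hout := h.mem_omega_iff.2 (h.pow_inv_mul_eq_one hp3 (Subtype.ext_iff.1 hab))
    simpa using QuotientGroup.eq.2 hout
  refine Nat.le_of_mul_le_mul_left ?_ (Nat.card_pos (α := agemo p S))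
  rw [card_mul_index, ← (omega p S).card_mul_index, mul_comm]
  exact Nat.mul_le_mul_right _ hcard

theorem commutator_le_agemo (h : HasSmallOmega p S) (hp3 : 3 < p) : commutator S ≤ agemo p S :=
  Normal.quotient_commutative_iff_commutator_le.1 <| isMulCommutative_of_card_le_prime_sq
    (h.isPGroup.to_quotient _) ((h.index_agemo_le hp3).trans h.card_omega_le)

theorem exists_closure_range_eq_top (h : HasSmallOmega p S) (hp3 : 3 < p) {d : ℕ}
    (hd : Nat.card (omega p S) ≤ p ^ d) : ∃ g : Fin d → S, closure (Set.range g) = ⊤ := by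
  obtain ⟨g, hg⟩ := exists_closure_range_sup_eq_top h.isPGroup ((h.index_agemo_le hp3).trans hd)
  exact ⟨g, eq_top_of_sup_agemo_eq_top h.isPGroup hg⟩

theorem isCyclic_of_card_omega_lt (h : HasSmallOmega p S) (hp3 : 3 < p)
    (hlt : Nat.card (omega p S) < p ^ 2) : IsCyclic S := by
  have hp : p.Prime := Fact.out
  obtain ⟨n, hn⟩ := IsPGroup.iff_card.1 (h.isPGroup.to_subgroup (omega p S))
  have hn2 : n < 2 := (Nat.pow_lt_pow_iff_right hp.one_lt).1 (hn ▸ hlt)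
  obtain ⟨g, hg⟩ := h.exists_closure_range_eq_top hp3
    (hn.trans_le (Nat.pow_le_pow_right hp.pos (Nat.le_of_lt_succ hn2)))
  rw [Set.range_unique, ← zpowers_eq_closure] at hg
  exact isCyclic_iff_exists_zpowers_eq_top.2 ⟨_, hg⟩

theorem exists_closure_pair_eq_top (h : HasSmallOmega p S) (hp3 : 3 < p) :
    ∃ x y : S, closure {x, y} = ⊤ := by
  obtain ⟨g, hg⟩ := h.exists_closure_range_eq_top hp3 h.card_omega_le
  exact ⟨g 0, g 1, by rw [← hg]; congr 1; ext; simp [Fin.exists_fin_two, eq_comm]⟩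

theorem commutator_commutator_le_map_agemo (h : HasSmallOmega p S) (hp3 : 3 < p) :
    ⁅(⊤ : Subgroup S), commutator S⁆ ≤ (agemo p (commutator S)).map (commutator S).subtype := by
  set D := commutator S
  set R := (agemo p D).map D.subtype
  have hD : HasSmallOmega p D := h.to_subgroup D
  let π := QuotientGroup.mk' R
  have hmap : commutator (S ⧸ R) = D.map π := by
    simp only [D, _root_.commutator, map_commutator,
      map_top_of_surjective π (QuotientGroup.mk'_surjective R)]
  have hexp : ∀ x ∈ commutator (S ⧸ R), x ^ p = 1 := by
    rw [hmap]
    rintro _ ⟨d, hd, rfl⟩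
    rw [← map_pow]
    exact (QuotientGroup.eq_one_iff _).2 ⟨_, pow_mem_agemo p ⟨d, hd⟩, rfl⟩
  have hcard : Nat.card (commutator (S ⧸ R)) ≤ p ^ 2 := by
    have hindex : Nat.card (D.map π) = (agemo p D).index := by
      rw [← relIndex_ker, QuotientGroup.ker_mk', relIndex, subgroupOf,
        comap_map_eq_self_of_injective D.subtype_injective]
    rw [hmap, hindex]
    exact (hD.index_agemo_le hp3).trans hD.card_omega_le
  have hcenter : D.map π ≤ center (S ⧸ R) := by
    refine (map_mono (h.commutator_le_agemo hp3)).trans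
      (map_le_iff_le_comap.2 ((closure_le _).2 ?_))
    rintro _ ⟨x, rfl⟩
    change π (x ^ p) ∈ center (S ⧸ R)
    rw [map_pow]
    exact pow_mem_center_of_card_commutator_le hp3 (h.isPGroup.to_quotient R) hcard hexp _
  refine Subgroup.commutator_le.2 fun g _ d hd ↦ (QuotientGroup.eq_one_iff _).1 ?_
  exact commutatorElement_eq_one_iff_mul_comm.2 (mem_center_iff.1 (hcenter ⟨d, hd, rfl⟩) (π g))

theorem isCyclic_commutator (h : HasSmallOmega p S) (hp3 : 3 < p) : IsCyclic (commutator S) := by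
  set D := commutator S
  set R := (agemo p D).map D.subtype
  obtain ⟨x, y, hxy⟩ := h.exists_closure_pair_eq_top hp3
  have hc : ⁅x, y⁆ ∈ D := commutator_mem_commutator (mem_top x) (mem_top y)
  have hle : zpowers ⁅x, y⁆ ⊔ R ≤ D := sup_le (zpowers_le.2 hc) (map_subtype_le _)
  have : (zpowers ⁅x, y⁆ ⊔ R).Normal := commutator_top_left_le_iff.1 <|
    (commutator_mono le_rfl hle).trans
      ((h.commutator_commutator_le_map_agemo hp3).trans le_sup_right)
  have heq : zpowers ⁅x, y⁆ ⊔ R = D := hle.antisymm <|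
    commutator_le_of_closure_pair_eq_top hxy (mem_sup_left (mem_zpowers _))
  refine isCyclic_iff_exists_zpowers_eq_top.2 ⟨⟨⁅x, y⁆, hc⟩, ?_⟩
  refine eq_top_of_sup_agemo_eq_top (h.to_subgroup D).isPGroup
    (map_injective D.subtype_injective ?_)
  rw [Subgroup.map_sup, MonoidHom.map_zpowers, ← MonoidHom.range_eq_map, range_subtype]
  exact heq

theorem mulAut_eq_one (h : HasSmallOmega p S) (hp3 : 3 < p) {t : MulAut S} {n : ℕ}
    (hn : n.Coprime p) (ht : t ^ n = 1) (htriv : ∀ e : S, e ^ p = 1 → t e = e) : t = 1 := by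
  refine MulEquiv.ext fun x ↦ ?_
  obtain ⟨k, hk⟩ := h.isPGroup x
  induction k generalizing x with
  | zero => rw [show x = 1 by simpa using hk, map_one, map_one]
  | succ k ih =>
    have htx : t x ^ p = x ^ p := by
      rw [← map_pow]
      exact ih (x ^ p) (by rwa [← pow_mul, ← pow_succ'])
    set e := x⁻¹ * t x
    have hep : e ^ p = 1 := h.pow_inv_mul_eq_one hp3 htx.symm
    have hte : t x = x * e := (mul_inv_cancel_left _ _).symm
    have hiter (j : ℕ) : (t ^ j) x = x * e ^ j := by
      induction j with
      | zero => simp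
      | succ j ihj =>
        rw [pow_succ', MulAut.mul_apply, ihj, map_mul, map_pow, htriv e hep, hte, mul_assoc,
          ← pow_succ']
    have hen : e ^ n = 1 := by simpa [ht] using hiter n
    have he1 : e = 1 := by simpa [hn.gcd_eq_one] using pow_gcd_eq_one.2 ⟨hen, hep⟩
    rw [hte, he1, mul_one, MulAut.one_apply]

end HasSmallOmega

end SmallOmega

section LinearAlgebra

variable {K V : Type*} [Field K] [AddCommGroup V] [Module K V]

theorem isSemisimple_of_pow_eq_one {f : Module.End K V} {n : ℕ} (hn : (n : K) ≠ 0)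
    (hf : f ^ n = 1) : f.IsSemisimple :=
  Module.End.isSemisimple_of_squarefree_aeval_eq_zero (p := .X ^ n - 1)
    (Polynomial.X_pow_sub_one_separable_iff.2 hn).squarefree (by simp [hf])

variable [FiniteDimensional K V]

theorem exists_sq_eq_smul_add_smul_one (hV : Module.finrank K V ≤ 2) (f : Module.End K V) :
    ∃ α β : K, f ^ 2 = α • f + β • 1 := by
  set P : Polynomial K := f.charpoly * .X ^ (2 - Module.finrank K V)
  have hmonic : P.Monic := f.charpoly_monic.mul (Polynomial.monic_X_pow _)
  have hdeg : P.natDegree = 2 := by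
    rw [f.charpoly_monic.natDegree_mul (Polynomial.monic_X_pow _), Polynomial.natDegree_X_pow,
      f.charpoly_natDegree, Nat.add_sub_cancel' hV]
  have hlead : P.coeff 2 = 1 := hdeg ▸ hmonic
  have hzero : Polynomial.aeval f P = 0 := by rw [map_mul, f.aeval_self_charpoly, zero_mul]
  simp only [Polynomial.aeval_eq_sum_range, hdeg, Finset.sum_range_succ, Finset.sum_range_zero,
    zero_add, pow_zero, pow_one, hlead, one_smul] at hzero
  refine ⟨-P.coeff 1, -P.coeff 0, ?_⟩
  rw [← sub_eq_zero, ← hzero]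
  module

theorem eq_zero_and_sq_mul_eq_of_mul_eq {A : Type*} [Ring A] [Algebra K A] (h2 : (2 : K) ≠ 0)
    {x s : A} (hx : LinearIndependent K ![1, x]) (hs : IsUnit s) {δ b e : K}
    (hxδ : x * x = δ • 1) (hsx : s * x = (b • x + e • 1) * s) : e = 0 ∧ b ^ 2 * δ = δ := by
  rw [LinearIndependent.pair_iff] at hx
  have hsq : (b • x + e • 1) * (b • x + e • 1) = δ • 1 := by
    refine hs.mul_right_cancel ?_
    calc (b • x + e • 1) * (b • x + e • 1) * s = s * x * x := by
          rw [mul_assoc, ← hsx, ← mul_assoc, ← hsx]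
      _ = δ • 1 * s := by rw [mul_assoc, hxδ, mul_smul_comm, mul_one, smul_mul_assoc, one_mul]
  have hexpand : (b ^ 2 * δ + e ^ 2 - δ) • 1 + (2 * b * e) • x = 0 := by
    rw [← sub_eq_zero] at hsq
    rw [← hsq]
    simp only [add_mul, mul_add, smul_mul_assoc, mul_smul_comm, one_mul, mul_one, hxδ]
    module
  have hb : b ≠ 0 := by
    rintro rfl
    refine one_ne_zero (hx (-e) 1 ?_).2
    have : s * x = s * (e • 1) := by rw [hsx, mul_smul_comm]; simp
    rw [hs.mul_left_cancel this]
    module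
  obtain ⟨hconst, hlin⟩ := hx _ _ hexpand
  have he : e = 0 := by simpa [h2, hb] using hlin
  exact ⟨he, by simpa [he, sub_eq_zero] using hconst⟩

theorem exists_pow_eq_smul_add_smul_one {A : Type*} [Ring A] [Algebra K A] {c : A} {α β : K}
    (hc : c ^ 2 = α • c + β • 1) (j : ℕ) : ∃ a b : K, c ^ j = b • c + a • 1 := by
  induction j with
  | zero => exact ⟨1, 0, by simp⟩
  | succ j ih =>
    obtain ⟨a, b, hab⟩ := ih
    refine ⟨b * β, a + b * α, ?_⟩
    rw [pow_succ, hab, add_mul, smul_mul_assoc, smul_mul_assoc, one_mul, ← pow_two, hc]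
    module

theorem commute_of_mul_eq_smul_mul {A : Type*} [Ring A] [Algebra K A] {s x : A} {b : K} {m : ℕ}
    (hb : b ^ 2 = 1) (hm : Odd m) (hs : s ^ m = 1) (hsx : s * x = b • x * s) : Commute s x := by
  have hsq : Commute (s ^ 2) x := by
    calc s ^ 2 * x = s * (s * x) := by rw [pow_two, mul_assoc]
      _ = s * (b • x * s) := by rw [hsx]
      _ = b • (s * x * s) := by rw [smul_mul_assoc, mul_smul_comm, mul_assoc]
      _ = x * s ^ 2 := by
        rw [hsx, smul_mul_assoc, smul_mul_assoc, smul_smul, ← pow_two, hb, one_smul, mul_assoc,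
          pow_two]
  obtain ⟨k, rfl⟩ := hm
  have hpow : s = (s ^ 2) ^ (k + 1) := by
    rw [← pow_mul, mul_add_one, pow_add, pow_two, ← mul_assoc, ← pow_succ, hs, one_mul]
  exact hpow ▸ hsq.pow_left _

theorem commute_of_mul_eq_pow_mul (hV : Module.finrank K V ≤ 2) (h2 : (2 : K) ≠ 0)
    {c s : Module.End K V} {n m j : ℕ} (hn : (n : K) ≠ 0) (hc : c ^ n = 1) (hm : Odd m)
    (hs : s ^ m = 1) (hsc : s * c = c ^ j * s) : Commute s c := by
  obtain ⟨α, β, hq⟩ := exists_sq_eq_smul_add_smul_one hV c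
  obtain ⟨a, b, hab⟩ := exists_pow_eq_smul_add_smul_one hq j
  have hsu : IsUnit s := .of_pow_eq_one hs hm.pos.ne'
  -- `x` is the traceless part of `c`, so its square is a scalar.
  set x := c - (α / 2) • 1 with hx
  have hcx : c = x + (α / 2) • 1 := (sub_add_cancel _ _).symm
  suffices h : Commute s x from hcx ▸ h.add_right ((Commute.one_right s).smul_right _)
  by_cases hli : LinearIndependent K ![1, x]
  · have hxδ : x * x = (β + (α / 2) ^ 2) • 1 := by
      have hα : α = 2 * (α / 2) := by field_simp
      simp only [hx, sub_mul, mul_sub, smul_mul_assoc, mul_smul_comm, one_mul, mul_one,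
        ← pow_two c, hq]
      nth_rewrite 1 [hα]
      module
    have hsx : s * x = (b • x + (a + b * (α / 2) - α / 2) • 1) * s := by
      rw [hx, mul_sub, hsc, hab]
      simp only [add_mul, smul_mul_assoc, mul_smul_comm, one_mul, mul_one, sub_mul]
      module
    obtain ⟨he, hbδ⟩ := eq_zero_and_sq_mul_eq_of_mul_eq h2 hli hsu hxδ hsx
    rw [he, zero_smul, add_zero] at hsx
    obtain hδ | hδ := eq_or_ne (β + (α / 2) ^ 2) 0
    · have hnil : IsNilpotent x := ⟨2, by rw [pow_two, hxδ, hδ, zero_smul]⟩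
      have hss : x.IsSemisimple := by
        rw [hx, ← Algebra.algebraMap_eq_smul_one, Module.End.isSemisimple_sub_algebraMap_iff]
        exact isSemisimple_of_pow_eq_one hn hc
      rw [Module.End.eq_zero_of_isNilpotent_isSemisimple hnil hss]
      exact Commute.zero_right s
    · exact commute_of_mul_eq_smul_mul (mul_right_cancel₀ hδ (by rw [hbδ, one_mul])) hm hs hsx
  · obtain _ | _ := subsingleton_or_nontrivial (Module.End K V)
    · exact Subsingleton.elim _ _
    obtain ⟨l, hl⟩ := not_forall_not.1 (hli ∘ (LinearIndependent.pair_iff' one_ne_zero).2)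
    exact hl ▸ (Commute.one_right s).smul_right l

end LinearAlgebra

section MulAutLinear

variable {p : ℕ} {E : Type*} [CommGroup E] [Module (ZMod p) (Additive E)]

/-- An automorphism of an elementary abelian `p`-group, as an endomorphism of a vector space over
`ZMod p`. -/
def mulAutToEnd (p : ℕ) (E : Type*) [CommGroup E] [Module (ZMod p) (Additive E)] :
    MulAut E →* Module.End (ZMod p) (Additive E) where
  toFun t := t.toMonoidHom.toAdditive.toZModLinearMap p
  map_one' := rfl
  map_mul' _ _ := rfl

theorem mulAutToEnd_injective : Function.Injective (mulAutToEnd p E) := fun _ _ h ↦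
  MulEquiv.ext fun x ↦ congrArg (fun t ↦ (t (.ofMul x)).toMul) h

end MulAutLinear

section ElementaryAbelian

variable {p : ℕ} [Fact p.Prime] {E : Type*} [CommGroup E] [Finite E]

theorem natCast_ne_zero_of_coprime {n : ℕ} (hn : n.Coprime p) : (n : ZMod p) ≠ 0 := by
  rw [Ne, ZMod.natCast_eq_zero_iff]
  exact (Fact.out : p.Prime).coprime_iff_not_dvd.1 hn.symm

theorem finrank_additive_le [Module (ZMod p) (Additive E)] {d : ℕ} (hE : Nat.card E ≤ p ^ d) :
    Module.finrank (ZMod p) (Additive E) ≤ d := by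
  have hcard := Module.natCard_eq_pow_finrank (K := ZMod p) (V := Additive E)
  rw [Nat.card_zmod, show Nat.card (Additive E) = Nat.card E from rfl] at hcard
  exact (Nat.pow_le_pow_iff_right (Fact.out : p.Prime).one_lt).1 (hcard ▸ hE)

theorem commute_of_conj_mem_zpowers (hp2 : 2 < p) (hexp : ∀ x : E, x ^ p = 1)
    (hcard : Nat.card E ≤ p ^ 2) {c s : MulAut E} {n m : ℕ} (hn : n.Coprime p) (hc : c ^ n = 1)
    (hm : Odd m) (hs : s ^ m = 1) (hsc : s * c * s⁻¹ ∈ zpowers c) : Commute s c := by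
  have : Module (ZMod p) (Additive E) :=
    AddCommGroup.zmodModule fun x ↦ congrArg Additive.ofMul (hexp x.toMul)
  have : Finite (Additive E) := ‹Finite E›
  obtain ⟨j, hj⟩ := (isOfFinOrder_of_finite c).mem_powers_iff_mem_zpowers.2 hsc
  have hsc' : s * c = c ^ j * s := by rw [show c ^ j = s * c * s⁻¹ from hj, inv_mul_cancel_right]
  refine mulAutToEnd_injective (p := p) ?_
  rw [map_mul, map_mul]
  refine commute_of_mul_eq_pow_mul (finrank_additive_le hcard) ?_ (natCast_ne_zero_of_coprime hn)
    (by rw [← map_pow, hc, map_one]) hm (by rw [← map_pow, hs, map_one])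
    (by rw [← map_mul, hsc', map_mul, map_pow])
  exact_mod_cast natCast_ne_zero_of_coprime ((Nat.coprime_primes Nat.prime_two Fact.out).2 hp2.ne)

theorem exists_isCompl_of_pow_eq_one (hexp : ∀ x : E, x ^ p = 1) (t : MulAut E) {n : ℕ}
    (hn : n.Coprime p) (ht : t ^ n = 1) {L : Subgroup E} (hL : ∀ x ∈ L, t x ∈ L) :
    ∃ Y : Subgroup E, (∀ x ∈ Y, t x ∈ Y) ∧ IsCompl L Y := by
  have : Module (ZMod p) (Additive E) :=
    AddCommGroup.zmodModule fun x ↦ congrArg Additive.ofMul (hexp x.toMul)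
  have : Finite (Additive E) := ‹Finite E›
  have hss : (mulAutToEnd p E t).IsSemisimple :=
    isSemisimple_of_pow_eq_one (natCast_ne_zero_of_coprime hn) (by rw [← map_pow, ht, map_one])
  let Φ : Subgroup E ≃o Submodule (ZMod p) (Additive E) :=
    toAddSubgroup.trans (AddSubgroup.toZModSubmodule p)
  obtain ⟨Y, hY, hLY⟩ := Module.End.isSemisimple_iff.1 hss (Φ L) hL
  obtain ⟨Y, rfl⟩ := Φ.surjective Y
  exact ⟨Y, hY, Φ.isCompl_iff.2 hLY⟩

end ElementaryAbelian

section Fitting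

open scoped Pointwise

/-- The `p`-core `O_p(G)`, the largest normal `p`-subgroup of `G`, encoded as the intersection of
the Sylow `p`-subgroups. -/
def pCore (p : ℕ) (G : Type*) [Group G] : Subgroup G :=
  ⨅ P : Sylow p G, (P : Subgroup G)

/-- The product of the `q`-cores `O_q(G)`, `q ∈ π`. Dropping a prime `p` from the prime divisors of
`|G|` gives the normal `p'`-subgroup modulo which `G` is studied one prime at a time. -/
def fittingPart (π : Finset ℕ) (G : Type*) [Group G] : Subgroup G :=
  ⨆ q : π, pCore q G

/-- The Fitting subgroup of a finite group, encoded as the product of all its `p`-cores; that it is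
the largest nilpotent normal subgroup is `isNilpotent_fitting` and `le_fitting`. -/
noncomputable def fitting (G : Type*) [Group G] : Subgroup G :=
  fittingPart (Nat.card G).primeFactors G

variable {G : Type*} [Group G] {p q : ℕ} {π : Finset ℕ}

theorem pCore_le (P : Sylow p G) : pCore p G ≤ P :=
  iInf_le _ P

theorem isPGroup_pCore (p : ℕ) (G : Type*) [Group G] : IsPGroup p (pCore p G) :=
  have ⟨P⟩ := Sylow.nonempty (p := p) (G := G)
  P.isPGroup'.to_le (pCore_le P)

theorem le_pCore {H : Subgroup G} [H.Normal] (hH : IsPGroup p H) : H ≤ pCore p G :=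
  le_iInf fun P ↦ sup_eq_right.1 <|
    P.is_maximal' (hH.to_sup_of_normal_left P.isPGroup') le_sup_right

instance normal_pCore (p : ℕ) (G : Type*) [Group G] : (pCore p G).Normal where
  conj_mem x hx g := mem_iInf.2 fun P ↦ by
    have hxP : x ∈ MulAut.conj g⁻¹ • (P : Subgroup G) := mem_iInf.1 hx (g⁻¹ • P)
    simpa [mem_pointwise_smul_iff_inv_smul_mem] using hxP

theorem commute_of_mem_pCore (hp : p.Prime) (hq : q.Prime) (hpq : p ≠ q) {x y : G}
    (hx : x ∈ pCore p G) (hy : y ∈ pCore q G) : Commute x y :=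
  have := Fact.mk hp
  have := Fact.mk hq
  commute_of_normal_of_disjoint _ _ inferInstance inferInstance
    (IsPGroup.disjoint_of_ne p q hpq _ _ (isPGroup_pCore p G) (isPGroup_pCore q G)) x y hx hy

instance normal_fittingPart (π : Finset ℕ) (G : Type*) [Group G] : (fittingPart π G).Normal := by
  unfold fittingPart
  infer_instance

instance normal_fitting (G : Type*) [Group G] : (fitting G).Normal :=
  normal_fittingPart _ G

theorem pCore_le_fittingPart (hq : q ∈ π) : pCore q G ≤ fittingPart π G :=
  le_iSup (fun q : π ↦ pCore q G) ⟨q, hq⟩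

theorem exists_surjective_pi_fittingPart (hπ : ∀ q ∈ π, q.Prime) :
    ∃ f : (∀ q : π, pCore q G) →* fittingPart π G, Function.Surjective f := by
  have hcomm : Pairwise fun i j : π ↦ ∀ x y : G, x ∈ pCore i G → y ∈ pCore j G → Commute x y :=
    fun i j hij _ _ ↦ commute_of_mem_pCore (hπ _ i.2) (hπ _ j.2) (Subtype.coe_ne_coe.2 hij)
  have hrange : (noncommPiCoprod hcomm).range = fittingPart π G := noncommPiCoprod_range
  exact ⟨(MulEquiv.subgroupCongr hrange).toMonoidHom.comp (noncommPiCoprod hcomm).rangeRestrict,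
    (MulEquiv.subgroupCongr hrange).surjective.comp (MonoidHom.rangeRestrict_surjective _)⟩

theorem pCore_eq_bot_of_not_dvd_card (hp : p.Prime) (hpG : ¬ p ∣ Nat.card G) : pCore p G = ⊥ := by
  have := Fact.mk hp
  exact card_eq_one.1 <| (isPGroup_pCore p G).card_eq_or_dvd.resolve_right fun hdvd ↦
    hpG (hdvd.trans (card_subgroup_dvd_card _))

theorem fitting_le_sup_centralizer_pCore (hp : p.Prime) :
    fitting G ≤ pCore p G ⊔ centralizer (pCore p G : Set G) := by
  refine iSup_le fun ⟨q, hq⟩ ↦ ?_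
  rcases eq_or_ne p q with rfl | hpq
  · exact le_sup_left
  · refine le_sup_of_le_right fun x hx ↦ mem_centralizer_iff.2 fun y hy ↦ ?_
    exact (commute_of_mem_pCore hp (Nat.prime_of_mem_primeFactors hq) hpq hy hx).eq

variable [Finite G]

theorem isNilpotent_fittingPart (hπ : ∀ q ∈ π, q.Prime) : Group.IsNilpotent (fittingPart π G) := by
  obtain ⟨f, hf⟩ := exists_surjective_pi_fittingPart (G := G) hπ
  have (q : π) : Group.IsNilpotent (pCore q G) :=
    have := Fact.mk (hπ q q.2)
    (isPGroup_pCore q G).isNilpotent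
  exact Group.nilpotent_of_surjective f hf

theorem coprime_card_fittingPart (hπ : ∀ q ∈ π, q.Prime) (hp : p.Prime) (hpπ : p ∉ π) :
    (Nat.card (fittingPart π G)).Coprime p := by
  obtain ⟨f, hf⟩ := exists_surjective_pi_fittingPart (G := G) hπ
  refine Nat.Coprime.coprime_dvd_left (card_dvd_of_surjective f hf) ?_
  rw [Nat.card_pi]
  refine Nat.Coprime.prod_left fun q _ ↦ ?_
  have := Fact.mk (hπ q q.2)
  obtain ⟨n, hn⟩ := IsPGroup.iff_card.1 (isPGroup_pCore q G)
  rw [hn]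
  exact .pow_left _ <| (Nat.coprime_primes (hπ q q.2) hp).2 fun hqp ↦ hpπ (hqp ▸ q.2)

theorem isNilpotent_fitting (G : Type*) [Group G] [Finite G] : Group.IsNilpotent (fitting G) :=
  isNilpotent_fittingPart fun _ ↦ Nat.prime_of_mem_primeFactors

theorem pCore_le_fitting (hp : p.Prime) : pCore p G ≤ fitting G := by
  by_cases hpG : p ∣ Nat.card G
  · exact pCore_le_fittingPart (Nat.mem_primeFactors.2 ⟨hp, hpG, Nat.card_pos.ne'⟩)
  · exact (pCore_eq_bot_of_not_dvd_card hp hpG).trans_le bot_le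

theorem le_fitting {H : Subgroup G} [H.Normal] [Group.IsNilpotent H] : H ≤ fitting G := by
  rw [← subgroupOf_eq_top, ← index_eq_one]
  by_contra hne
  obtain ⟨p, hp, hdvd⟩ := Nat.exists_prime_and_dvd hne
  have := Fact.mk hp
  obtain ⟨P⟩ : Nonempty (Sylow p H) := Sylow.nonempty
  have : (P : Subgroup H).Characteristic := P.characteristic_of_normal inferInstance
  have hP : (P : Subgroup H) ≤ (fitting G).subgroupOf H := map_le_iff_le_comap.1 <|
    (le_pCore (P.isPGroup'.map H.subtype)).trans (pCore_le_fitting hp)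
  exact P.not_dvd_index (hdvd.trans (index_dvd_of_le hP))

end Fitting

section IsQGroup

/-- A Q-group: for every divisor `m` of the exponent, `x ^ m = 1` has at most `m ^ 2` solutions. -/
def IsQGroup (G : Type*) [Group G] : Prop :=
  ∀ m : ℕ, m ∣ Monoid.exponent G → Nat.card {x : G // x ^ m = 1} ≤ m ^ 2

variable {G : Type*} [Group G] {p : ℕ}

theorem IsQGroup.card_le (hG : IsQGroup G) {m : ℕ} (hm : 0 < m) :
    Nat.card {x : G // x ^ m = 1} ≤ m ^ 2 := by
  have hiff (x : G) : x ^ m = 1 ↔ x ^ m.gcd (Monoid.exponent G) = 1 := by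
    rw [pow_gcd_eq_one, and_iff_left (Monoid.pow_exponent_eq_one x)]
  calc Nat.card {x : G // x ^ m = 1} = Nat.card {x : G // x ^ m.gcd (Monoid.exponent G) = 1} :=
        Nat.card_congr (Equiv.subtypeEquivRight hiff)
    _ ≤ m.gcd (Monoid.exponent G) ^ 2 := hG _ (Nat.gcd_dvd_right _ _)
    _ ≤ m ^ 2 := by gcongr; exact Nat.gcd_le_left _ hm

theorem three_lt_of_prime_of_dvd {n : ℕ} (hn : n.Coprime 6) (hp : p.Prime) (hpn : p ∣ n) :
    3 < p := by
  by_contra! hle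
  have hp6 : p ∣ 6 := by
    have := hp.two_le
    interval_cases p <;> decide
  exact hp.one_lt.ne' (Nat.eq_one_of_dvd_coprimes hn hpn hp6)

variable [Finite G]

theorem HasSmallOmega.of_isPGroup (hcard : Nat.card {x : G // x ^ p = 1} ≤ p ^ 2)
    {H : Subgroup G} (hH : IsPGroup p H) : HasSmallOmega p H where
  isPGroup := hH
  card_le := hcard.trans' <| Nat.card_le_card_of_injective
    (fun x ↦ (⟨x.1, by simpa using congrArg Subtype.val x.2⟩ : {x : G // x ^ p = 1}))
    fun _ _ hab ↦ Subtype.ext (Subtype.ext (congrArg Subtype.val hab :))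

theorem HasSmallOmega.mem_map_subtype_omega_iff [Fact p.Prime] {H : Subgroup G}
    (hH : HasSmallOmega p H) {x : G} : x ∈ (omega p H).map H.subtype ↔ x ∈ H ∧ x ^ p = 1 := by
  constructor
  · rintro ⟨y, hy, rfl⟩
    exact ⟨y.2, by simpa using congrArg Subtype.val (hH.mem_omega_iff.1 hy)⟩
  · rintro ⟨hx, hxp⟩
    exact ⟨⟨x, hx⟩, hH.mem_omega_iff.2 (Subtype.ext hxp), rfl⟩

theorem exists_normal_of_not_isCyclic [Fact p.Prime] (hp3 : 3 < p)
    (hcard : Nat.card {x : G // x ^ p = 1} ≤ p ^ 2) {H : Subgroup G} (hH : IsPGroup p H)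
    (hHc : ¬ IsCyclic H) :
    ∃ E : Subgroup G, E.Normal ∧ Nat.card E = p ^ 2 ∧ ∀ x, x ∈ E ↔ x ^ p = 1 := by
  have hH := HasSmallOmega.of_isPGroup hcard hH
  let E := (omega p H).map H.subtype
  have hle : p ^ 2 ≤ Nat.card E := by
    rw [card_map_of_injective H.subtype_injective]
    by_contra! hlt
    exact hHc (hH.isCyclic_of_card_omega_lt hp3 hlt)
  have hE : (E : Set G) = {x | x ^ p = 1} :=
    Set.eq_of_subset_of_ncard_le (fun x hx ↦ (hH.mem_map_subtype_omega_iff.1 hx).2)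
      (hcard.trans hle)
  have hmem (x : G) : x ∈ E ↔ x ^ p = 1 := Set.ext_iff.1 hE x
  refine ⟨E, ⟨fun x hx g ↦ ?_⟩, (hle.antisymm' ?_), hmem⟩
  · rw [hmem] at hx ⊢
    rw [conj_pow, hx, mul_one, mul_inv_cancel]
  · exact (Nat.card_congr (Equiv.subtypeEquivRight hmem)).trans_le hcard

theorem exists_normal_pow_succ [Fact p.Prime] (hp3 : 3 < p) {k : ℕ}
    (hcard : Nat.card {x : G // x ^ p ^ (k + 1) = 1} ≤ (p ^ (k + 1)) ^ 2) {W : Subgroup G}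
    [W.Normal] (hWc : Nat.card W = (p ^ k) ^ 2) (hW : ∀ x, x ∈ W ↔ x ^ p ^ k = 1)
    {H : Subgroup (G ⧸ W)} (hH : IsPGroup p H) (hHc : ¬ IsCyclic H) :
    ∃ V : Subgroup G, V.Normal ∧ Nat.card V = (p ^ (k + 1)) ^ 2 ∧
      ∀ x, x ∈ V ↔ x ^ p ^ (k + 1) = 1 := by
  have hpow (x : G) : (x : G ⧸ W) ^ p = 1 ↔ x ^ p ^ (k + 1) = 1 := by
    rw [← QuotientGroup.mk_pow, QuotientGroup.eq_one_iff, hW, ← pow_mul, ← pow_succ']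
  have hmul : (p ^ (k + 1)) ^ 2 = (p ^ k) ^ 2 * p ^ 2 := by ring
  have hle : Nat.card {x : G ⧸ W // x ^ p = 1} ≤ p ^ 2 := by
    have hpre := QuotientGroup.card_preimage_mk W {x : G ⧸ W | x ^ p = 1}
    have hset : (QuotientGroup.mk ⁻¹' {x : G ⧸ W | x ^ p = 1} : Set G) =
        {x | x ^ p ^ (k + 1) = 1} := Set.ext hpow
    rw [hset, hWc] at hpre
    refine Nat.le_of_mul_le_mul_left ?_ (pow_pos (pow_pos (Fact.out : p.Prime).pos k) 2)
    exact hpre.symm.trans_le (hcard.trans_eq hmul)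
  obtain ⟨E, hEn, hEc, hE⟩ := exists_normal_of_not_isCyclic hp3 hle hH hHc
  refine ⟨E.comap (QuotientGroup.mk' W), inferInstance, ?_, fun x ↦ ?_⟩
  · exact (QuotientGroup.card_preimage_mk W (E : Set (G ⧸ W))).trans (by
      rw [hWc, hmul]; exact congrArg _ hEc)
  · rw [mem_comap, hE, QuotientGroup.mk'_apply, hpow]

theorem IsQGroup.exists_normal_isPGroup (hG : IsQGroup G) [Fact p.Prime]
    (hp3 : 3 < p) :
    ∃ W : Subgroup G, ∃ _ : W.Normal, IsPGroup p W ∧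
      ∀ H : Subgroup (G ⧸ W), IsPGroup p H → IsCyclic H := by
  have hp : p.Prime := Fact.out
  by_contra! hcon
  have key (k : ℕ) : ∃ W : Subgroup G, W.Normal ∧ Nat.card W = (p ^ k) ^ 2 ∧
      ∀ x, x ∈ W ↔ x ^ p ^ k = 1 := by
    induction k with
    | zero => exact ⟨⊥, inferInstance, by simp, by simp⟩
    | succ k ih =>
      obtain ⟨W, hWn, hWc, hW⟩ := ih
      obtain ⟨H, hH, hHc⟩ := hcon W hWn (.of_card (hWc.trans (pow_mul p k 2).symm))
      exact exists_normal_pow_succ hp3 (hG.card_le (pow_pos hp.pos (k + 1))) hWc hW hH hHc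
  obtain ⟨W, -, hWc, -⟩ := key (Nat.card G)
  have hlt : Nat.card G < (p ^ Nat.card G) ^ 2 :=
    (Nat.lt_pow_self hp.one_lt).trans_le (Nat.le_self_pow two_ne_zero _)
  exact (card_le_card_group W).not_gt (hWc ▸ hlt)

theorem IsQGroup.isZGroup_quotient_fitting (hG : IsQGroup G)
    (hcop : (Nat.card G).Coprime 6) : IsZGroup (G ⧸ fitting G) where
  isZGroup q hq P := by
    have := Fact.mk hq
    obtain ⟨S, rfl⟩ := Sylow.mapSurjective_surjective (QuotientGroup.mk'_surjective (fitting G)) q P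
    by_cases hqG : q ∣ Nat.card G
    · obtain ⟨W, hWn, hWp, hW⟩ :=
        hG.exists_normal_isPGroup (three_lt_of_prime_of_dvd hcop hq hqG)
      have := hW _ (S.isPGroup'.map (QuotientGroup.mk' W))
      let φ : G ⧸ W →* G ⧸ fitting G :=
        QuotientGroup.map W _ (MonoidHom.id G) ((le_pCore hWp).trans (pCore_le_fitting hq))
      have hφ : (S : Subgroup G).map (QuotientGroup.mk' (fitting G)) =
          ((S : Subgroup G).map (QuotientGroup.mk' W)).map φ := by
        rw [Subgroup.map_map]
        rfl
      rw [Sylow.coe_mapSurjective, hφ]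
      exact isCyclic_of_surjective _ (φ.subgroupMap_surjective _)
    · have hS : (S : Subgroup G) = ⊥ := card_eq_one.1 <|
        S.isPGroup'.card_eq_or_dvd.resolve_right fun hdvd ↦
          hqG (hdvd.trans (card_subgroup_dvd_card _))
      rw [Sylow.coe_mapSurjective, hS, Subgroup.map_bot]
      infer_instance

end IsQGroup

section Centralizers

variable {G : Type*} [Group G]

theorem ker_conjNormal (N : Subgroup G) [N.Normal] :
    (MulAut.conjNormal : G →* MulAut N).ker = centralizer (N : Set G) := by
  ext g
  simp only [MonoidHom.mem_ker, MulEquiv.ext_iff, Subtype.ext_iff, MulAut.conjNormal_apply,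
    MulAut.one_apply, mul_inv_eq_iff_eq_mul, mem_centralizer_iff, Subtype.forall, SetLike.mem_coe]
  exact forall₂_congr fun _ _ ↦ eq_comm

theorem commutator_le_centralizer_of_isCyclic (N : Subgroup G) [N.Normal] [hN : IsCyclic N] :
    commutator G ≤ centralizer (N : Set G) := by
  let e := hN.mulAutMulEquiv N
  let _ := e.toMonoidHom.commGroupOfInjective e.injective
  rw [← ker_conjNormal]
  exact Abelianization.commutator_subset_ker (MulAut.conjNormal : G →* MulAut N)

theorem normal_of_le_of_isCyclic {A N : Subgroup G} [hN : N.Normal] [IsCyclic N] (hAN : A ≤ N) :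
    A.Normal where
  conj_mem a ha g := by
    obtain ⟨m, hm⟩ := MonoidHom.map_cyclic
      ((MulAut.conjNormal g : MulAut N).toMonoidHom)
    have hconj : g * a * g⁻¹ = a ^ m := by simpa using congrArg Subtype.val (hm ⟨a, hAN ha⟩)
    exact hconj ▸ zpow_mem ha m

theorem eq_bot_of_le_center_of_le_commutator [Finite G] {r : ℕ} [Fact r.Prime] {Q : Sylow r G}
    (hcenter : (Q : Subgroup G) ≤ center G) (hcomm : (Q : Subgroup G) ≤ commutator G) :
    (Q : Subgroup G) = ⊥ := by
  have hQ : normalizer (Q : Set G) ≤ centralizer (Q : Set G) :=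
    le_top.trans_eq (centralizer_eq_top_iff_subset.2 hcenter).symm
  have : IsMulCommutative Q := ⟨⟨fun a b ↦ Subtype.ext (mem_center_iff.1 (hcenter b.2) a)⟩⟩
  have hker : commutator G ≤ (MonoidHom.transferSylow Q hQ).ker :=
    Abelianization.commutator_subset_ker _
  exact (MonoidHom.ker_transferSylow_disjoint Q hQ Q Q.isPGroup').eq_bot_of_ge
    (hcomm.trans hker)

theorem commute_of_commute_commutatorElement {g e : G} {n p : ℕ} (hgc : Commute g ⁅g, e⁆)
    (hg : g ^ n = 1) (hc : ⁅g, e⁆ ^ p = 1) (hn : n.Coprime p) : Commute g e := by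
  have hconj : e * g * e⁻¹ = ⁅g, e⁆⁻¹ * g := by rw [commutatorElement_def]; group
  have hcn : ⁅g, e⁆ ^ n = 1 := by
    have hpow : e * g ^ n * e⁻¹ = (⁅g, e⁆ ^ n)⁻¹ * g ^ n := by
      rw [← conj_pow, hconj, hgc.inv_right.symm.mul_pow, inv_pow]
    simpa [hg] using hpow
  rw [← commutatorElement_eq_one_iff_commute, ← pow_one ⁅g, e⁆, ← hn.gcd_eq_one]
  exact pow_gcd_eq_one.2 ⟨hcn, hc⟩

end Centralizers

section SylowOfCommutator

variable {G : Type*} [Group G] [Finite G] {p r : ℕ} [Fact p.Prime]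

/- Every subgroup of the cyclic group `G'` is normal in `G`, so `G` sends each element of `Q` to one
of its powers; two-dimensional linear algebra then makes `φ(Q)` central in `φ(G)`, and transfer
shows that a central Sylow subgroup meets the commutator subgroup trivially. -/
theorem map_eq_one_of_sylow_le_commutator [Fact r.Prime] (hrp : r ≠ p) (hp2 : 2 < p)
    (hodd : Odd (Nat.card G)) [IsCyclic (commutator G)] {Q : Sylow r G}
    (hQ : (Q : Subgroup G) ≤ commutator G) {E : Type*} [CommGroup E] [Finite E]
    (hexp : ∀ x : E, x ^ p = 1) (hcard : Nat.card E ≤ p ^ 2) (φ : G →* MulAut E) {x : G}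
    (hx : x ∈ Q) : φ x = 1 := by
  have hcenter (y : G) (hy : y ∈ Q) (s : G) : Commute (φ s) (φ y) := by
    obtain ⟨k, hk⟩ := Q.isPGroup' ⟨y, hy⟩
    have hyk : y ^ r ^ k = 1 := congrArg Subtype.val hk
    have : (zpowers y).Normal := normal_of_le_of_isCyclic (zpowers_le.2 (hQ hy))
    have hconj : s * y * s⁻¹ ∈ zpowers y := Normal.conj_mem this y (mem_zpowers y) s
    refine commute_of_conj_mem_zpowers hp2 hexp hcard (n := r ^ k) (m := Nat.card G)
      (.pow_left _ ((Nat.coprime_primes Fact.out Fact.out).2 hrp)) ?_ hodd ?_ ?_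
    · rw [← map_pow, hyk, map_one]
    · rw [← map_pow, pow_card_eq_one', map_one]
    · simpa [MonoidHom.map_zpowers] using mem_map_of_mem φ hconj
  let T := Q.mapSurjective φ.rangeRestrict_surjective
  have hT : (T : Subgroup φ.range) = ⊥ := by
    refine eq_bot_of_le_center_of_le_commutator ?_ ?_
    · rintro _ ⟨y, hy, rfl⟩
      rw [mem_center_iff]
      rintro ⟨_, s, rfl⟩
      exact Subtype.ext (hcenter y hy s)
    · rw [Sylow.coe_mapSurjective, map_le_iff_le_comap]
      refine hQ.trans (map_le_iff_le_comap.1 ?_)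
      rw [map_commutator_eq]
      exact commutator_mono le_top le_top
  have hxT : φ.rangeRestrict x ∈ (T : Subgroup φ.range) := ⟨x, hx, rfl⟩
  rw [hT, mem_bot] at hxT
  exact congrArg Subtype.val hxT

end SylowOfCommutator

section Stabilizer

variable {G : Type*} [Group G] [Finite G] {p : ℕ} [Fact p.Prime]

theorem isCyclic_of_card_le_prime {H : Type*} [Group H] [Finite H] (hH : IsPGroup p H)
    (hcard : Nat.card H ≤ p) : IsCyclic H := by
  have hp : p.Prime := Fact.out
  obtain ⟨a, ha⟩ := IsPGroup.iff_card.1 hH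
  have ha1 : a ≤ 1 := (Nat.pow_le_pow_iff_right hp.one_lt).1 (by rwa [← ha, pow_one])
  exact isCyclic_of_card_dvd_prime (p := p) (by simpa [ha] using pow_dvd_pow p ha1)

theorem isCyclic_commutator_and_isCyclic_map {E P : Subgroup G} [E.Normal] [P.Normal]
    (hP : IsPGroup p P) (hEP : E ≤ P) (hcard : Nat.card E ≤ p ^ 2) (hne : ⁅E, P⁆ ≠ ⊥) :
    IsCyclic (⁅E, P⁆ : Subgroup G) ∧ IsCyclic (E.map (QuotientGroup.mk' ⁅E, P⁆)) := by
  have hp : p.Prime := Fact.out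
  have := hP.isNilpotent
  have hE : IsPGroup p E := hP.to_le hEP
  have hlt : ⁅E, P⁆ < E := commutator_lt_of_isNilpotent E P hEP fun h ↦
    hne (by rw [h, commutator_bot_left])
  have hEcard : p * Nat.card (⁅E, P⁆ : Subgroup G) ≤ Nat.card E := mul_card_le_card_of_lt hE hlt
  have hCcard : p ≤ Nat.card (⁅E, P⁆ : Subgroup G) := by
    simpa using mul_card_le_card_of_lt (hE.to_le hlt.le) (bot_lt_iff_ne_bot.2 hne)
  refine ⟨isCyclic_of_card_le_prime (hE.to_le hlt.le) ?_, isCyclic_of_card_le_prime (hE.map _) ?_⟩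
  · exact Nat.le_of_mul_le_mul_left (hEcard.trans (hcard.trans_eq (sq p))) hp.pos
  · have hmul := relIndex_mul_relIndex ⊥ ⁅E, P⁆ E bot_le hlt.le
    rw [relIndex_bot_left, relIndex_bot_left] at hmul
    rw [← relIndex_ker, QuotientGroup.ker_mk']
    refine Nat.le_of_mul_le_mul_left ?_ hp.pos
    calc p * ⁅E, P⁆.relIndex E ≤ Nat.card (⁅E, P⁆ : Subgroup G) * ⁅E, P⁆.relIndex E := by gcongr
      _ ≤ p * p := hmul.trans_le (hcard.trans_eq (sq p))

/- `G'` and `F` stabilise the series `1 < ⁅E, P⁆ < E`, whose factors are cyclic, and a `p'`-element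
stabilising it is trivial on `E`. -/
theorem mem_centralizer_of_commutator_ne_bot {E P F : Subgroup G} [E.Normal] [P.Normal]
    (hP : IsPGroup p P) (hEP : E ≤ P) (hexp : ∀ e ∈ E, e ^ p = 1) (hcard : Nat.card E ≤ p ^ 2)
    (hne : ⁅E, P⁆ ≠ ⊥) (hF : F ≤ P ⊔ centralizer (P : Set G)) {g : G} {n : ℕ}
    (hg : g ∈ commutator G ⊔ F) (hgn : g ^ n = 1) (hn : n.Coprime p) :
    g ∈ centralizer (E : Set G) := by
  have ⟨_, _⟩ := isCyclic_commutator_and_isCyclic_map hP hEP hcard hne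
  let C := ⁅E, P⁆
  have hCE : C ≤ E := commutator_le_left E P
  let E' := E.map (QuotientGroup.mk' C)
  have : E'.Normal := .map inferInstance _ (QuotientGroup.mk'_surjective C)
  let T := centralizer (C : Set G) ⊓ (centralizer (E' : Set (G ⧸ C))).comap (QuotientGroup.mk' C)
  have hGT : commutator G ≤ T := by
    refine le_inf (commutator_le_centralizer_of_isCyclic C) (map_le_iff_le_comap.1 ?_)
    rw [map_commutator_eq]
    exact (commutator_mono le_top le_top).trans (commutator_le_centralizer_of_isCyclic E')
  have hPT : P ≤ T := by
    refine le_inf ?_ (map_le_iff_le_comap.1 ?_) <;> rw [← commutator_eq_bot_iff_le_centralizer,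
      commutator_comm]
    · exact commutator_commutator_eq_bot_of_card_le hP hEP hcard
    · rw [← map_commutator, Subgroup.map_eq_bot_iff, QuotientGroup.ker_mk']
  have hPT' : centralizer (P : Set G) ≤ T := by
    refine le_inf (centralizer_le (hCE.trans hEP)) (map_le_iff_le_comap.1 ?_)
    rw [← commutator_eq_bot_iff_le_centralizer, ← map_commutator,
      commutator_eq_bot_iff_le_centralizer.2 (centralizer_le hEP), Subgroup.map_bot]
  obtain ⟨hgC, hgE⟩ := sup_le hGT (hF.trans (sup_le hPT hPT')) hg
  refine mem_centralizer_iff.2 fun e he ↦ Commute.symm ?_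
  have hgeC : ⁅g, e⁆ ∈ C := by
    rw [← QuotientGroup.ker_mk' C, MonoidHom.mem_ker, map_commutatorElement,
      commutatorElement_eq_one_iff_mul_comm]
    exact (mem_centralizer_iff.1 hgE _ (mem_map_of_mem _ he)).symm
  exact commute_of_commute_commutatorElement (mem_centralizer_iff.1 hgC _ hgeC).symm hgn
    (hexp _ (hCE hgeC)) hn

end Stabilizer

section QuotientByFitting

variable {G : Type*} [Group G]

theorem map_mk'_commutator (F : Subgroup G) [F.Normal] :
    (commutator G).map (QuotientGroup.mk' F) = commutator (G ⧸ F) := by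
  rw [map_commutator_eq, QuotientGroup.range_mk', _root_.commutator_def]

theorem le_commutator_sup_of_map_le {F A : Subgroup G} [F.Normal]
    (hA : A.map (QuotientGroup.mk' F) ≤ commutator (G ⧸ F)) : A ≤ commutator G ⊔ F := by
  rwa [← map_mk'_commutator, map_le_iff_le_comap, comap_map_eq, QuotientGroup.ker_mk'] at hA

variable [Finite G] {p r : ℕ} [Fact r.Prime]

theorem sylow_le_fitting [IsCyclic (commutator (G ⧸ fitting G))] {R : Sylow r G}
    (hR : (R : Subgroup G).map (QuotientGroup.mk' (fitting G)) ≤ commutator (G ⧸ fitting G))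
    (hcentral : ∀ q, q.Prime → q ≠ r → (R : Subgroup G) ≤ centralizer (pCore q G : Set G)) :
    (R : Subgroup G) ≤ fitting G := by
  have hr : r.Prime := Fact.out
  have hnorm : fitting G ≤ normalizer ((R : Subgroup G) : Set G) := by
    refine iSup_le fun ⟨q, hq⟩ ↦ ?_
    rcases eq_or_ne q r with rfl | hqr
    · exact (pCore_le R).trans le_normalizer
    · exact (le_centralizer_iff.1 (hcentral q (Nat.prime_of_mem_primeFactors hq) hqr)).trans
        (centralizer_le_normalizer _)
  have : ((R : Subgroup G) ⊔ fitting G).Normal := by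
    have := normal_of_le_of_isCyclic hR
    have hcomap := comap_map_eq (QuotientGroup.mk' (fitting G)) R
    rw [QuotientGroup.ker_mk'] at hcomap
    exact hcomap ▸ inferInstance
  have htop := R.normalizer_sup_eq_top' (N := (R : Subgroup G) ⊔ fitting G) le_sup_left
  have : (R : Subgroup G).Normal := normalizer_eq_top_iff.1
    ((sup_eq_left.2 (sup_le le_normalizer hnorm)).symm.trans htop)
  exact (le_pCore R.isPGroup').trans (pCore_le_fitting hr)

variable [Fact p.Prime]

theorem sylow_le_centralizer_of_le_centralizer {E F : Subgroup G} [E.Normal] [IsMulCommutative E]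
    [F.Normal] [IsCyclic (commutator (G ⧸ F))] (hrp : r ≠ p) (hp2 : 2 < p)
    (hodd : Odd (Nat.card G)) (hexp : ∀ e : E, e ^ p = 1) (hcard : Nat.card E ≤ p ^ 2)
    (hFE : F ≤ centralizer (E : Set G)) {R : Sylow r G}
    (hR : (R : Subgroup G).map (QuotientGroup.mk' F) ≤ commutator (G ⧸ F)) :
    (R : Subgroup G) ≤ centralizer (E : Set G) := by
  let φ : G ⧸ F →* MulAut E := QuotientGroup.lift F MulAut.conjNormal
    (hFE.trans (ker_conjNormal E).ge)
  intro g hg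
  rw [← ker_conjNormal]
  exact map_eq_one_of_sylow_le_commutator (Q := R.mapSurjective (QuotientGroup.mk'_surjective F))
    hrp hp2 (hodd.of_dvd_nat (card_quotient_dvd_card F)) hR hexp hcard φ ⟨g, hg, rfl⟩

theorem sylow_le_centralizer_omega {P F : Subgroup G} [P.Normal] [F.Normal]
    [IsCyclic (commutator (G ⧸ F))] (hrp : r ≠ p) (hp2 : 2 < p) (hodd : Odd (Nat.card G))
    (hP : HasSmallOmega p P) (hF : F ≤ P ⊔ centralizer (P : Set G)) {R : Sylow r G}
    (hR : (R : Subgroup G).map (QuotientGroup.mk' F) ≤ commutator (G ⧸ F)) :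
    (R : Subgroup G) ≤ centralizer ((omega p P).map P.subtype : Set G) := by
  let E := (omega p P).map P.subtype
  have hEP : E ≤ P := map_subtype_le _
  have hexp (e : G) (he : e ∈ E) : e ^ p = 1 := (hP.mem_map_subtype_omega_iff.1 he).2
  have hcard : Nat.card E ≤ p ^ 2 :=
    (card_map_of_injective P.subtype_injective).trans_le hP.card_omega_le
  by_cases hcomm : ⁅E, P⁆ = ⊥
  · have := isMulCommutative_of_card_le_prime_sq (hP.isPGroup.to_le hEP) hcard
    refine sylow_le_centralizer_of_le_centralizer hrp hp2 hodd
      (fun e ↦ Subtype.ext (hexp e e.2)) hcard (hF.trans (sup_le ?_ (centralizer_le hEP))) hR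
    rwa [← commutator_eq_bot_iff_le_centralizer, commutator_comm]
  · intro g hg
    obtain ⟨k, hk⟩ := R.isPGroup' ⟨g, hg⟩
    exact mem_centralizer_of_commutator_ne_bot hP.isPGroup hEP hexp hcard hcomm hF
      (le_commutator_sup_of_map_le hR hg) (congrArg Subtype.val hk)
      (.pow_left k ((Nat.coprime_primes Fact.out Fact.out).2 hrp))

theorem sylow_le_centralizer {P F : Subgroup G} [P.Normal] [F.Normal]
    [IsCyclic (commutator (G ⧸ F))] (hrp : r ≠ p) (hp3 : 3 < p) (hodd : Odd (Nat.card G))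
    (hP : HasSmallOmega p P) (hF : F ≤ P ⊔ centralizer (P : Set G)) {R : Sylow r G}
    (hR : (R : Subgroup G).map (QuotientGroup.mk' F) ≤ commutator (G ⧸ F)) :
    (R : Subgroup G) ≤ centralizer (P : Set G) := by
  intro g hg
  obtain ⟨k, hk⟩ := R.isPGroup' ⟨g, hg⟩
  have hgk : g ^ r ^ k = 1 := congrArg Subtype.val hk
  have hgE := sylow_le_centralizer_omega hrp (by lia) hodd hP hF hR hg
  rw [← ker_conjNormal, MonoidHom.mem_ker]
  refine hP.mulAut_eq_one hp3 (.pow_left k ((Nat.coprime_primes Fact.out Fact.out).2 hrp))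
    (by rw [← map_pow, hgk, map_one]) fun e he ↦ Subtype.ext ?_
  rw [MulAut.conjNormal_apply, mul_inv_eq_iff_eq_mul]
  exact (mem_centralizer_iff.1 hgE e ⟨e, hP.mem_omega_iff.2 he, rfl⟩).symm

theorem IsQGroup.hasSmallOmega (hG : IsQGroup G) {H : Subgroup G}
    (hH : IsPGroup p H) : HasSmallOmega p H :=
  .of_isPGroup (hG.card_le (Fact.out : p.Prime).pos) hH

theorem odd_of_coprime_six {n : ℕ} (hn : n.Coprime 6) : Odd n :=
  Nat.coprime_two_right.1 (hn.coprime_dvd_right (by decide))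

theorem IsQGroup.sylow_le_centralizer_pCore (hG : IsQGroup G)
    (hcop : (Nat.card G).Coprime 6) [IsCyclic (commutator (G ⧸ fitting G))] {R : Sylow r G}
    (hR : (R : Subgroup G).map (QuotientGroup.mk' (fitting G)) ≤ commutator (G ⧸ fitting G))
    (hrp : r ≠ p) : (R : Subgroup G) ≤ centralizer (pCore p G : Set G) := by
  have hp : p.Prime := Fact.out
  by_cases hpG : p ∣ Nat.card G
  · exact sylow_le_centralizer hrp (three_lt_of_prime_of_dvd hcop hp hpG)
      (odd_of_coprime_six hcop) (hG.hasSmallOmega (isPGroup_pCore p G))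
      (fitting_le_sup_centralizer_pCore hp) hR
  · rw [← commutator_eq_bot_iff_le_centralizer, pCore_eq_bot_of_not_dvd_card hp hpG,
      commutator_bot_right]

theorem IsQGroup.commutator_quotient_fitting_eq_bot (hG : IsQGroup G)
    (hcop : (Nat.card G).Coprime 6) : commutator (G ⧸ fitting G) = ⊥ := by
  have := hG.isZGroup_quotient_fitting hcop
  have := IsZGroup.isCyclic_commutator (G := G ⧸ fitting G)
  by_contra hne
  obtain ⟨r, hr, hrdvd⟩ := Nat.exists_prime_and_dvd fun hcard ↦ hne (card_eq_one.1 hcard)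
  have := Fact.mk hr
  obtain ⟨R⟩ : Nonempty (Sylow r G) := Sylow.nonempty
  let Q := R.mapSurjective (QuotientGroup.mk'_surjective (fitting G))
  have hrQ : r ∣ Nat.card Q := Q.dvd_card_of_dvd_card (hrdvd.trans (card_subgroup_dvd_card _))
  have hQ : (Q : Subgroup (G ⧸ fitting G)) ≤ commutator (G ⧸ fitting G) := by
    refine (Q.isPGroup'.le_or_disjoint_of_coprime
      (IsZGroup.coprime_commutator_index _)).resolve_right fun hdisj ↦ ?_
    have hcardQ := relIndex_dvd_index_of_normal (commutator (G ⧸ fitting G)) Q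
    rw [← inf_relIndex_right, hdisj.eq_bot, relIndex_bot_left] at hcardQ
    exact hr.ne_one (Nat.eq_one_of_dvd_coprimes
      (IsZGroup.coprime_commutator_index _) hrdvd (hrQ.trans hcardQ))
  have hRF : (R : Subgroup G) ≤ fitting G := sylow_le_fitting hQ fun q hq hqr ↦
    have := Fact.mk hq
    hG.sylow_le_centralizer_pCore hcop hQ hqr.symm
  have hQbot : (Q : Subgroup (G ⧸ fitting G)) = ⊥ := by
    rwa [Sylow.coe_mapSurjective, Subgroup.map_eq_bot_iff, QuotientGroup.ker_mk']
  rw [hQbot, card_bot] at hrQ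
  exact hr.one_lt.ne' (Nat.dvd_one.1 hrQ)

theorem IsQGroup.isCyclic_quotient_fitting (hG : IsQGroup G)
    (hcop : (Nat.card G).Coprime 6) : IsCyclic (G ⧸ fitting G) := by
  have := hG.isZGroup_quotient_fitting hcop
  have := (commutator_eq_bot_iff _).1 (hG.commutator_quotient_fitting_eq_bot hcop)
  infer_instance

end QuotientByFitting

section CyclicExtension

variable {p : ℕ}

theorem exists_normal_complement {A : Type*} [Group A] [Finite A] [Fact p.Prime]
    {C V L : Subgroup A} [C.Normal] [V.Normal] [L.Normal] [IsMulCommutative V]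
    [IsCyclic (A ⧸ C)] (hcop : (Nat.card (A ⧸ C)).Coprime p) (hC : C ≤ centralizer (V : Set A))
    (hexp : ∀ v : V, v ^ p = 1) (hLV : L ≤ V) :
    ∃ Y : Subgroup A, Y.Normal ∧ Y ≤ V ∧ Disjoint L Y ∧ L ⊔ Y = V := by
  obtain ⟨τ, ht⟩ := IsCyclic.exists_generator (α := A ⧸ C)
  obtain ⟨t, rfl⟩ := QuotientGroup.mk_surjective τ
  have htC : t ^ Nat.card (A ⧸ C) ∈ C :=
    (QuotientGroup.eq_one_iff _).1 (pow_card_eq_one' (x := (t : A ⧸ C)))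
  have hone : (MulAut.conjNormal t : MulAut V) ^ Nat.card (A ⧸ C) = 1 := by
    rw [← map_pow, ← MonoidHom.mem_ker, ker_conjNormal]
    exact hC htC
  obtain ⟨Y, hY, hLY⟩ := exists_isCompl_of_pow_eq_one hexp (MulAut.conjNormal t) hcop hone
    (L := L.subgroupOf V) fun x hx ↦ ‹L.Normal›.conj_mem x hx t
  have htop : zpowers t ⊔ C = ⊤ := by
    rw [← QuotientGroup.ker_mk' C, ← comap_map_eq, MonoidHom.map_zpowers]
    exact eq_top_iff.2 fun x _ ↦ ht x
  refine ⟨Y.map V.subtype, normalizer_eq_top_iff.1 (top_le_iff.1 ?_), map_subtype_le _, ?_, ?_⟩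
  · rw [← htop, sup_le_iff, zpowers_le]
    refine ⟨mem_normalizer_fintype ?_, hC.trans ((centralizer_le (map_subtype_le Y)).trans
      (centralizer_le_normalizer _))⟩
    rintro _ ⟨y, hy, rfl⟩
    exact ⟨_, hY y hy, rfl⟩
  · rw [← map_subgroupOf_eq_of_le hLV]
    exact disjoint_map V.subtype_injective hLY.disjoint
  · rw [← map_subgroupOf_eq_of_le hLV, ← Subgroup.map_sup, hLY.sup_eq_top, ← MonoidHom.range_eq_map,
      range_subtype]

theorem mem_omega_iff_of_isMulCommutative {S : Type*} [Group S] [IsMulCommutative S] {x : S} :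
    x ∈ omega p S ↔ x ^ p = 1 :=
  ⟨fun hx ↦ (closure_le (powMonoidHom p : S →* S).ker).2 (fun _ hy ↦ hy) hx,
    fun hx ↦ subset_closure hx⟩

theorem card_omega_le_of_isCyclic {S : Type*} [Group S] [IsCyclic S] (hp : 0 < p) :
    Nat.card (omega p S) ≤ p := by
  rw [← IsCyclic.exponent_eq_card]
  exact Nat.le_of_dvd hp (Monoid.exponent_dvd_of_forall_pow_eq_one fun x ↦
    Subtype.ext (mem_omega_iff_of_isMulCommutative.1 x.2))

theorem sq_le_card_omega_of_not_isCyclic {S : Type*} [Group S] [Finite S] [IsMulCommutative S]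
    [Fact p.Prime] (hp3 : 3 < p) (hS : IsPGroup p S) (hcyc : ¬IsCyclic S) :
    p ^ 2 ≤ Nat.card (omega p S) := by
  by_contra! hlt
  have hsmall : HasSmallOmega p S := ⟨hS, (Nat.card_congr (Equiv.subtypeEquivRight fun _ ↦
    mem_omega_iff_of_isMulCommutative)).symm.trans_le hlt.le⟩
  exact hcyc (hsmall.isCyclic_of_card_omega_lt hp3 hlt)

theorem exists_normal_disjoint_of_not_isCyclic {A : Type*} [Group A] [Finite A] [Fact p.Prime]
    {T L : Subgroup A} [T.Normal] [L.Normal] [IsMulCommutative T] [IsCyclic (A ⧸ T)]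
    (hp3 : 3 < p) (hcop : (Nat.card (A ⧸ T)).Coprime p) (hT : IsPGroup p T) (hcyc : ¬IsCyclic T)
    (hLT : L ≤ T) (hexp : ∀ x ∈ L, x ^ p = 1) (hcard : Nat.card L < p ^ 2) :
    ∃ Y : Subgroup A, Y.Normal ∧ Y ≤ T ∧ Y ≠ ⊥ ∧ Disjoint L Y := by
  let V := (omega p T).map T.subtype
  have hVT : V ≤ T := map_subtype_le _
  have hTV : T ≤ centralizer (V : Set A) :=
    (le_centralizer_iff_isMulCommutative.2 ‹_›).trans (centralizer_le hVT)
  have : IsMulCommutative V := le_centralizer_iff_isMulCommutative.1 (hVT.trans hTV)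
  have hLV : L ≤ V := fun x hx ↦ ⟨⟨x, hLT hx⟩, subset_closure (Subtype.ext (hexp x hx)), rfl⟩
  have hexpV (v : V) : v ^ p = 1 := by
    obtain ⟨x, hx, hxv⟩ := v.2
    have hxp : x ^ p = 1 := mem_omega_iff_of_isMulCommutative.1 hx
    exact Subtype.ext (by rw [coe_pow, ← hxv, ← map_pow, hxp, map_one, coe_one])
  obtain ⟨Y, hYn, hYV, hdisj, hsup⟩ := exists_normal_complement hcop hTV hexpV hLV
  refine ⟨Y, hYn, hYV.trans hVT, ?_, hdisj⟩
  rintro rfl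
  have hcardV : Nat.card V = Nat.card (omega p T) := card_map_of_injective T.subtype_injective
  rw [sup_bot_eq] at hsup
  rw [hsup, hcardV] at hcard
  exact (sq_le_card_omega_of_not_isCyclic hp3 hT hcyc).not_gt hcard

variable {Γ : Type*} [Group Γ] [Finite Γ] [Fact p.Prime] {S B : Subgroup Γ}

theorem HasSmallOmega.card_map_omega_lt [B.Normal] (hS : HasSmallOmega p S) (hBS : B ≤ S)
    (hB : B ≠ ⊥) :
    Nat.card (((omega p S).map S.subtype).map (QuotientGroup.mk' B)) < p ^ 2 := by
  set E := (omega p S).map S.subtype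
  have hcardE : Nat.card E ≤ p ^ 2 :=
    (card_map_of_injective S.subtype_injective).trans_le hS.card_omega_le
  obtain ⟨b, hb⟩ := exists_prime_orderOf_dvd_card' (G := B) p
    ((hS.isPGroup.to_le hBS).card_eq_or_dvd.resolve_left fun hcard ↦ hB (card_eq_one.1 hcard))
  have hbE : (b : Γ) ∈ E := hS.mem_map_subtype_omega_iff.2
    ⟨hBS b.2, congrArg Subtype.val (orderOf_dvd_iff_pow_eq_one.1 hb.dvd)⟩
  have hbne : b ≠ 1 := by
    rintro rfl
    exact (Fact.out : p.Prime).ne_one (hb.symm.trans orderOf_one)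
  have hlt : 1 < Nat.card (B.subgroupOf E) := by
    rw [one_lt_card_iff_ne_bot, ne_bot_iff_exists_ne_one]
    exact ⟨⟨⟨b, hbE⟩, b.2⟩, fun h ↦ hbne (Subtype.ext (congrArg (fun x ↦ (x.1 : Γ)) h))⟩
  rw [← relIndex_ker, QuotientGroup.ker_mk']
  calc B.relIndex E < Nat.card (B.subgroupOf E) * (B.subgroupOf E).index :=
        lt_mul_of_one_lt_left (Nat.pos_of_ne_zero index_ne_zero_of_finite) hlt
    _ ≤ p ^ 2 := (card_mul_index _).trans_le hcardE

theorem HasSmallOmega.isCyclic_of_pow_eq_one_mem {Y : Subgroup Γ} [IsCyclic B] (hp3 : 3 < p)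
    (hY : HasSmallOmega p Y) (hYB : ∀ y ∈ Y, y ^ p = 1 → y ∈ B) : IsCyclic Y := by
  have hp : p.Prime := Fact.out
  refine hY.isCyclic_of_card_omega_lt hp3 ?_
  have hle : (omega p Y).map Y.subtype ≤ (omega p B).map B.subtype := fun y hy ↦
    have ⟨hyY, hyp⟩ := hY.mem_map_subtype_omega_iff.1 hy
    ⟨⟨y, hYB y hyY hyp⟩, subset_closure (Subtype.ext hyp), rfl⟩
  calc Nat.card (omega p Y) = Nat.card ((omega p Y).map Y.subtype) :=
        (card_map_of_injective Y.subtype_injective).symm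
    _ ≤ Nat.card ((omega p B).map B.subtype) := card_le_of_le hle
    _ = Nat.card (omega p B) := card_map_of_injective B.subtype_injective
    _ ≤ p := card_omega_le_of_isCyclic hp.pos
    _ < p ^ 2 := lt_self_pow₀ hp.one_lt (by decide)

theorem HasSmallOmega.exists_isCyclic_gt [S.Normal] [B.Normal] [IsCyclic (Γ ⧸ S)] [IsCyclic B]
    (hS : HasSmallOmega p S) (hp3 : 3 < p) (hcop : (Nat.card (Γ ⧸ S)).Coprime p)
    (hBS : B ≤ S) (hB : B ≠ ⊥) (hSB : ⁅S, S⁆ ≤ B)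
    (hcyc : ¬IsCyclic (S.map (QuotientGroup.mk' B))) :
    ∃ Y : Subgroup Γ, Y.Normal ∧ IsCyclic Y ∧ Y ≤ S ∧ B < Y := by
  set π := QuotientGroup.mk' B
  have hπ : Function.Surjective π := QuotientGroup.mk'_surjective B
  set T := S.map π
  have : T.Normal := ‹S.Normal›.map π hπ
  have hTcentral : T ≤ centralizer (T : Set (Γ ⧸ B)) := by
    rw [← commutator_eq_bot_iff_le_centralizer, ← map_commutator, Subgroup.map_eq_bot_iff,
      QuotientGroup.ker_mk']
    exact hSB
  have : IsMulCommutative T := le_centralizer_iff_isMulCommutative.1 hTcentral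
  let e := QuotientGroup.quotientQuotientEquivQuotient B S hBS
  have : IsCyclic ((Γ ⧸ B) ⧸ T) := isCyclic_of_surjective e.symm e.symm.surjective
  let E := (omega p S).map S.subtype
  have : (E.map π).Normal := .map inferInstance π hπ
  have hexp : ∀ x ∈ E.map π, x ^ p = 1 := by
    rintro _ ⟨x, hx, rfl⟩
    rw [← map_pow, (hS.mem_map_subtype_omega_iff.1 hx).2, map_one]
  obtain ⟨Y, hYn, hYT, hYne, hdisj⟩ := exists_normal_disjoint_of_not_isCyclic hp3
    (by rwa [Nat.card_congr e.toEquiv]) (hS.isPGroup.map π) hcyc (map_mono (map_subtype_le _))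
    hexp (hS.card_map_omega_lt hBS hB)
  have hYS : Y.comap π ≤ S := by
    have hcomap := comap_map_eq π S
    rw [QuotientGroup.ker_mk', sup_eq_left.2 hBS] at hcomap
    exact hcomap ▸ comap_mono hYT
  refine ⟨Y.comap π, inferInstance, ?_, hYS, ?_⟩
  · refine (hS.of_injective (inclusion_injective hYS)).isCyclic_of_pow_eq_one_mem (B := B) hp3
      fun y hy hyp ↦ (QuotientGroup.eq_one_iff y).1 (disjoint_def.1 hdisj ?_ hy)
    exact ⟨y, hS.mem_map_subtype_omega_iff.2 ⟨hYS hy, hyp⟩, rfl⟩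
  · refine lt_of_le_of_ne (QuotientGroup.le_comap_mk' B Y) fun hBY ↦ hYne ?_
    rw [← map_comap_eq_self_of_surjective hπ Y, ← hBY]
    exact QuotientGroup.map_mk'_self B

theorem HasSmallOmega.isMulCommutative_commutator_of_normal [S.Normal] [IsCyclic (Γ ⧸ S)]
    (hS : HasSmallOmega p S) (hp3 : 3 < p) (hcop : (Nat.card (Γ ⧸ S)).Coprime p) :
    IsMulCommutative (commutator Γ) := by
  have hΓS : commutator Γ ≤ S := Normal.quotient_commutative_iff_commutator_le.1 inferInstance
  by_cases hSS : ⁅S, S⁆ = ⊥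
  · have hS : S ≤ centralizer (S : Set Γ) := commutator_eq_bot_iff_le_centralizer.1 hSS
    exact le_centralizer_iff_isMulCommutative.1 (hΓS.trans (hS.trans (centralizer_le hΓS)))
  have : IsCyclic (⁅S, S⁆ : Subgroup Γ) := by
    have := hS.isCyclic_commutator hp3
    rw [← map_subtype_commutator]
    exact isCyclic_of_surjective _ (S.subtype.subgroupMap_surjective (commutator S))
  obtain ⟨B, hSB, hBmax⟩ := Finite.exists_le_maximal
    (p := fun B : Subgroup Γ ↦ B.Normal ∧ IsCyclic B ∧ B ≤ S) (a := ⁅S, S⁆)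
    ⟨inferInstance, this, commutator_le_self S⟩
  obtain ⟨hBn, hBc, hBS⟩ := hBmax.prop
  have hSBcyc : IsCyclic (S.map (QuotientGroup.mk' B)) := by
    by_contra hcyc
    obtain ⟨Y, hYn, hYc, hYS, hBY⟩ := hS.exists_isCyclic_gt hp3 hcop hBS
      (ne_bot_of_le_ne_bot hSS hSB) hSB hcyc
    exact hBmax.not_prop_of_gt hBY ⟨hYn, hYc, hYS⟩
  let f : commutator Γ →* S.map (QuotientGroup.mk' B) :=
    ((QuotientGroup.mk' B).subgroupMap S).comp (inclusion hΓS)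
  refine f.isMulCommutative_of_isCyclic_of_ker_le_center fun z hz ↦ mem_center_iff.2 fun w ↦ ?_
  have hzB : (z : Γ) ∈ B := (QuotientGroup.eq_one_iff _).1 (congrArg Subtype.val hz)
  exact Subtype.ext (commutator_le_centralizer_of_isCyclic B w.2 z hzB).symm

end CyclicExtension

section Metabelian

variable {G : Type*} [Group G] {p : ℕ}

theorem fitting_le_sup_fittingPart_erase [Fact p.Prime] (P : Sylow p G) :
    fitting G ≤ (P : Subgroup G) ⊔ fittingPart ((Nat.card G).primeFactors.erase p) G := by
  refine iSup_le fun ⟨q, hq⟩ ↦ ?_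
  rcases eq_or_ne q p with rfl | hqp
  · exact (pCore_le P).trans le_sup_left
  · exact (pCore_le_fittingPart (Finset.mem_erase.2 ⟨hqp, hq⟩)).trans le_sup_right

variable [Finite G]

theorem HasSmallOmega.map_mk' [Fact p.Prime] {P K : Subgroup G} [K.Normal]
    (hP : HasSmallOmega p P) (hK : (Nat.card K).Coprime p) :
    HasSmallOmega p (P.map (QuotientGroup.mk' K)) := by
  obtain ⟨n, hn⟩ := IsPGroup.iff_card.1 hP.isPGroup
  have hdisj : Disjoint K P := disjoint_of_coprime_natCard (hn ▸ hK.pow_right n)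
  have hinj : Function.Injective ((QuotientGroup.mk' K).subgroupMap P) :=
    (injective_iff_map_eq_one _).2 fun x hx ↦ Subtype.ext <| disjoint_def.1 hdisj
      ((QuotientGroup.eq_one_iff (x : G)).1 (congrArg Subtype.val hx)) x.2
  let e := MulEquiv.ofBijective _ ⟨hinj, (QuotientGroup.mk' K).subgroupMap_surjective P⟩
  exact hP.of_injective (f := e.symm.toMonoidHom) e.symm.injective

theorem coprime_card_fittingPart_erase (hp : p.Prime) :
    (Nat.card (fittingPart ((Nat.card G).primeFactors.erase p) G)).Coprime p :=
  coprime_card_fittingPart (fun _ hq ↦ Nat.prime_of_mem_primeFactors (Finset.mem_of_mem_erase hq))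
    hp (Finset.notMem_erase _ _)

theorem commutator_commutator_le_of_le_sup [Fact p.Prime] {P : Sylow p G} {F K : Subgroup G}
    [F.Normal] [K.Normal] [IsCyclic (G ⧸ F)] (hP : HasSmallOmega p P) (hp3 : 3 < p)
    (hK : (Nat.card K).Coprime p) (hF : F ≤ (P : Subgroup G) ⊔ K) :
    ⁅commutator G, commutator G⁆ ≤ K := by
  let π := QuotientGroup.mk' K
  have hπ : Function.Surjective π := QuotientGroup.mk'_surjective K
  obtain ⟨S, hSP⟩ : ∃ S : Sylow p (G ⧸ K), (S : Subgroup (G ⧸ K)) = (P : Subgroup G).map π :=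
    ⟨P.mapSurjective hπ, P.coe_mapSurjective hπ⟩
  have hFS : F ≤ (S : Subgroup (G ⧸ K)).comap π := by
    rwa [hSP, comap_map_eq, QuotientGroup.ker_mk']
  have hGS : commutator (G ⧸ K) ≤ S := by
    rw [← map_mk'_commutator, map_le_iff_le_comap]
    exact (Normal.quotient_commutative_iff_commutator_le.1 inferInstance).trans hFS
  have : (S : Subgroup (G ⧸ K)).Normal := Normal.of_commutator_le _ hGS
  have : IsCyclic ((G ⧸ K) ⧸ (S : Subgroup (G ⧸ K))) := isCyclic_of_surjective
    (QuotientGroup.map F S π hFS) (QuotientGroup.map_surjective_of_surjective _ _ _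
      ((QuotientGroup.mk'_surjective _).comp hπ) _)
  have hS : HasSmallOmega p (S : Subgroup (G ⧸ K)) := hSP ▸ hP.map_mk' hK
  have hcomm := hS.isMulCommutative_commutator_of_normal hp3
    ((Nat.Prime.coprime_iff_not_dvd Fact.out).2 S.not_dvd_index).symm
  rwa [← le_centralizer_iff_isMulCommutative, ← commutator_eq_bot_iff_le_centralizer,
    ← map_mk'_commutator, ← map_commutator, Subgroup.map_eq_bot_iff, QuotientGroup.ker_mk'] at hcomm

theorem IsQGroup.commutator_commutator_le_fittingPart (hG : IsQGroup G)
    (hcop : (Nat.card G).Coprime 6) (hp : p.Prime) (hpG : p ∣ Nat.card G) :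
    ⁅commutator G, commutator G⁆ ≤ fittingPart ((Nat.card G).primeFactors.erase p) G := by
  have := Fact.mk hp
  obtain ⟨P⟩ : Nonempty (Sylow p G) := Sylow.nonempty
  have := hG.isCyclic_quotient_fitting hcop
  exact commutator_commutator_le_of_le_sup (hG.hasSmallOmega P.isPGroup')
    (three_lt_of_prime_of_dvd hcop hp hpG) (coprime_card_fittingPart_erase hp)
    (fitting_le_sup_fittingPart_erase P)

theorem IsQGroup.isMulCommutative_commutator (hG : IsQGroup G)
    (hcop : (Nat.card G).Coprime 6) : IsMulCommutative (commutator G) := by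
  rw [← le_centralizer_iff_isMulCommutative, ← commutator_eq_bot_iff_le_centralizer]
  by_contra hne
  obtain ⟨p, hp, hdvd⟩ := Nat.exists_prime_and_dvd fun hcard ↦ hne (card_eq_one.1 hcard)
  have hle := hG.commutator_commutator_le_fittingPart hcop hp
    (hdvd.trans (card_subgroup_dvd_card _))
  exact hp.ne_one (Nat.eq_one_of_dvd_coprimes (coprime_card_fittingPart_erase hp)
    (hdvd.trans (card_dvd_of_le hle)) dvd_rfl)

end Metabelian

end QGroup

theorem Q_group_coprime_six_metabelian (G : Type*) [Group G] [Finite G]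
    (h : ∀ m : ℕ, m ∣ Monoid.exponent G → Nat.card {x : G // x ^ m = 1} ≤ m ^ 2)
    (hcop : Nat.gcd (Nat.card G) 6 = 1) :
    (∀ x y : ↥(commutator G), x * y = y * x) ∧
    -- the Fitting subgroup `F` : the largest nilpotent normal subgroup of `G`
    ∃ F : Subgroup G, ∃ hF : F.Normal, Group.IsNilpotent ↥F ∧
      (∀ H : Subgroup G, H.Normal → Group.IsNilpotent ↥H → H ≤ F) ∧
      (letI := hF; IsCyclic (G ⧸ F)) := by
  have hG : QGroup.IsQGroup G := h
  have := hG.isMulCommutative_commutator hcop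
  exact ⟨mul_comm', QGroup.fitting G, QGroup.normal_fitting G, QGroup.isNilpotent_fitting G,
    fun _ _ _ ↦ QGroup.le_fitting, hG.isCyclic_quotient_fitting hcop⟩
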